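/- arXiv:0708.2138 — 4 statements merged into one kernel-verified Lean document; each statement's English description precedes it below -/
import Mathlib

section
/- Let ω = Σ_{i=1}^l m_i α_i be a minuscule weight whose coefficients m_i are nonnegative rationals, I = {α ∈ S : ⟨ω, α∨⟩ = 0} and W^I = {w ∈ W : w(α) > 0 for all α ∈ I}, and let τ be the unique element of W^I with τ(ω) = Σ_{i=1}^l (m_i − ⌊m_i⌋) α_i (⌊·⌋ the floor). If σ ∈ W^I satisfies σ(nω) ≥ 0 for some positive integer n, then σ ≤ τ, i.e., ℓ(τ) = ℓ(σ) + ℓ(τσ^{−1}). -/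
open scoped RealInnerProductSpace

/-- A finite reduced crystallographic root system `Φ` spanning a real inner product
space `V`, together with a fixed base of simple roots `α 0, …, α (l-1)`: every root is
a nonnegative or nonpositive integral combination of the simple roots.  The simple
reflections `s i` are given by the usual formula `s_α(λ) = λ − ⟨λ, α∨⟩ α`. -/
structure RootSystemWithBase (V : Type*) [NormedAddCommGroup V] [InnerProductSpace ℝ V] where
  l : ℕ
  Φ : Finset V
  α : Fin l → V
  s : Fin l → V ≃ₗ[ℝ] V
  α_mem : ∀ i, α i ∈ Φ
  root_ne_zero : ∀ β ∈ Φ, β ≠ (0 : V)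
  root_span : Submodule.span ℝ (Φ : Set V) = ⊤
  simple_indep : LinearIndependent ℝ α
  crystallographic : ∀ β ∈ Φ, ∀ γ ∈ Φ, ∃ z : ℤ, 2 * ⟪β, γ⟫ / ⟪γ, γ⟫ = (z : ℝ)
  reduced : ∀ β ∈ Φ, ∀ c : ℝ, c • β ∈ Φ → c = 1 ∨ c = -1
  base : ∀ β ∈ Φ,
    (∃ c : Fin l → ℤ, (∀ i, 0 ≤ c i) ∧ β = ∑ i, (c i : ℝ) • α i) ∨
    (∃ c : Fin l → ℤ, (∀ i, 0 ≤ c i) ∧ β = -(∑ i, (c i : ℝ) • α i))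
  s_apply : ∀ i v, s i v = v - (2 * ⟪v, α i⟫ / ⟪α i, α i⟫) • α i
  s_root : ∀ β ∈ Φ, ∀ i, s i β ∈ Φ

namespace RootSystemWithBase

variable {V : Type*} [NormedAddCommGroup V] [InnerProductSpace ℝ V]

/-- The pairing `⟨λ, β∨⟩ = 2(λ,β)/(β,β)`. -/
noncomputable def pairing (_D : RootSystemWithBase V) (lam β : V) : ℝ :=
  2 * ⟪lam, β⟫ / ⟪β, β⟫

/-- The Weyl group: the subgroup of `GL(V)` generated by the simple reflections. -/
def W (D : RootSystemWithBase V) : Subgroup (V ≃ₗ[ℝ] V) := Subgroup.closure (Set.range D.s)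

/-- The product `s_{i₁} · s_{i₂} ⋯ s_{i_k}` of simple reflections along a word. -/
def wordProd (D : RootSystemWithBase V) (L : List (Fin D.l)) : V ≃ₗ[ℝ] V := (L.map D.s).prod

/-- The length `ℓ(w)`: the least `k` such that `w` is a product of `k` simple
reflections. -/
noncomputable def len (D : RootSystemWithBase V) (w : V ≃ₗ[ℝ] V) : ℕ :=
  sInf {k | ∃ L : List (Fin D.l), L.length = k ∧ D.wordProd L = w}

/-- `v` is a linear combination of the simple roots with all coefficients `≥ 0`. -/
def IsNonnegComb (D : RootSystemWithBase V) (v : V) : Prop :=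
  ∃ c : Fin D.l → ℝ, (∀ i, 0 ≤ c i) ∧ v = ∑ i, c i • D.α i

/-- `v > 0`: a nonzero nonnegative combination of the simple roots. -/
def IsPos (D : RootSystemWithBase V) (v : V) : Prop := D.IsNonnegComb v ∧ v ≠ 0

/-- `x ≤ y` for vectors: `y − x` is a nonnegative combination of the simple roots. -/
def vle (D : RootSystemWithBase V) (x y : V) : Prop := D.IsNonnegComb (y - x)

/-- `λ` is dominant: `⟨λ, αᵢ∨⟩ ≥ 0` for all `i`. -/
def IsDominant (D : RootSystemWithBase V) (lam : V) : Prop :=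
  ∀ i, 0 ≤ D.pairing lam (D.α i)

/-- `ω` is minuscule: dominant with `⟨ω, β∨⟩ ∈ {−1, 0, 1}` for every root `β`. -/
def IsMinuscule (D : RootSystemWithBase V) (ω : V) : Prop :=
  D.IsDominant ω ∧ ∀ β ∈ D.Φ, D.pairing ω β = -1 ∨ D.pairing ω β = 0 ∨ D.pairing ω β = 1

/-- `W^I = {w ∈ W : w(α) > 0 for all α ∈ I}` where `I = {α ∈ S : ⟨ω, α∨⟩ = 0}`. -/
def WI (D : RootSystemWithBase V) (ω : V) : Set (V ≃ₗ[ℝ] V) :=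
  {w | w ∈ D.W ∧ ∀ i, D.pairing ω (D.α i) = 0 → D.IsPos (w (D.α i))}

/-- `w ≤ τ` in `W`:  `ℓ(τ) = ℓ(w) + ℓ(τ w⁻¹)`. -/
def wle (D : RootSystemWithBase V) (w τ : V ≃ₗ[ℝ] V) : Prop :=
  D.len τ = D.len w + D.len (τ * w⁻¹)

end RootSystemWithBase

namespace RootSystemWithBase

variable {V : Type*} [NormedAddCommGroup V] [InnerProductSpace ℝ V]

theorem span_α (D : RootSystemWithBase V) : ⊤ ≤ Submodule.span ℝ (Set.range D.α) := by
  rw [← D.root_span, Submodule.span_le]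
  intro β hβ
  have key : ∀ c : Fin D.l → ℤ, ∑ i, (c i : ℝ) • D.α i ∈ Submodule.span ℝ (Set.range D.α) :=
    fun c => Submodule.sum_mem _ fun i _ =>
      Submodule.smul_mem _ _ (Submodule.subset_span ⟨i, rfl⟩)
  rcases D.base β hβ with ⟨c, _, h⟩ | ⟨c, _, h⟩
  · rw [h]; exact key c
  · rw [h]; exact Submodule.neg_mem _ (key c)

noncomputable def B (D : RootSystemWithBase V) : Module.Basis (Fin D.l) ℝ V :=
  Module.Basis.mk D.simple_indep D.span_α

theorem B_apply (D : RootSystemWithBase V) (i : Fin D.l) : D.B i = D.α i := by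
  simp [B]

theorem repr_sum (D : RootSystemWithBase V) (c : Fin D.l → ℝ) (j : Fin D.l) :
    D.B.repr (∑ i, c i • D.α i) j = c j := by
  simp only [← B_apply]
  exact congrFun (D.B.repr_sum_self c) j

theorem sum_repr' (D : RootSystemWithBase V) (v : V) :
    v = ∑ i, D.B.repr v i • D.α i := by
  simp only [← B_apply]
  exact (D.B.sum_repr v).symm

theorem repr_α (D : RootSystemWithBase V) (i j : Fin D.l) :
    D.B.repr (D.α i) j = if i = j then 1 else 0 := by
  rw [← B_apply, Module.Basis.repr_self, Finsupp.single_apply]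

theorem nonneg_iff (D : RootSystemWithBase V) (v : V) :
    D.IsNonnegComb v ↔ ∀ i, 0 ≤ D.B.repr v i := by
  constructor
  · rintro ⟨c, hc, rfl⟩ i
    rw [repr_sum]; exact hc i
  · intro h
    exact ⟨fun i => D.B.repr v i, h, D.sum_repr' v⟩

theorem root_sign (D : RootSystemWithBase V) {β : V} (hβ : β ∈ D.Φ) :
    (∀ i, 0 ≤ D.B.repr β i) ∨ (∀ i, D.B.repr β i ≤ 0) := by
  rcases D.base β hβ with ⟨c, hc, h⟩ | ⟨c, hc, h⟩
  · left; intro i; rw [h, repr_sum]; exact_mod_cast hc i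
  · right; intro i
    rw [h, map_neg, Finsupp.neg_apply, repr_sum]
    have : (0:ℝ) ≤ c i := by exact_mod_cast hc i
    linarith

theorem α_inner_pos (D : RootSystemWithBase V) (i : Fin D.l) : 0 < ⟪D.α i, D.α i⟫ :=
  real_inner_self_pos.2 (D.root_ne_zero _ (D.α_mem i))

theorem s_pair (D : RootSystemWithBase V) (i : Fin D.l) (v : V) :
    D.s i v = v - D.pairing v (D.α i) • D.α i := D.s_apply i v

theorem s_inner (D : RootSystemWithBase V) (i : Fin D.l) (u v : V) :
    ⟪D.s i u, D.s i v⟫ = ⟪u, v⟫ := by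
  have h := (D.α_inner_pos i).ne'
  rw [D.s_apply, D.s_apply]
  simp only [inner_sub_left, inner_sub_right, real_inner_smul_left, real_inner_smul_right]
  rw [real_inner_comm v (D.α i)]
  field_simp
  ring

theorem s_α (D : RootSystemWithBase V) (i : Fin D.l) : D.s i (D.α i) = - D.α i := by
  have h := (D.α_inner_pos i).ne'
  rw [D.s_apply, mul_div_assoc, div_self h, mul_one, two_smul]
  abel

theorem s_s (D : RootSystemWithBase V) (i : Fin D.l) (v : V) : D.s i (D.s i v) = v := by
  rw [D.s_apply i v, map_sub, map_smul, s_α, D.s_apply]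
  simp

theorem s_mul_s (D : RootSystemWithBase V) (i : Fin D.l) : D.s i * D.s i = 1 := by
  ext v; exact D.s_s i v

theorem s_inv (D : RootSystemWithBase V) (i : Fin D.l) : (D.s i)⁻¹ = D.s i :=
  inv_eq_of_mul_eq_one_left (D.s_mul_s i)

theorem wp_nil (D : RootSystemWithBase V) : D.wordProd [] = 1 := by simp [wordProd]
theorem wp_cons (D : RootSystemWithBase V) (i) (L) :
    D.wordProd (i :: L) = D.s i * D.wordProd L := by simp [wordProd]
theorem wp_append (D : RootSystemWithBase V) (L L') :
    D.wordProd (L ++ L') = D.wordProd L * D.wordProd L' := by simp [wordProd]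
theorem wp_snoc (D : RootSystemWithBase V) (i) (L) :
    D.wordProd (L ++ [i]) = D.wordProd L * D.s i := by simp [wordProd]

theorem s_mem (D : RootSystemWithBase V) (i : Fin D.l) : D.s i ∈ D.W :=
  Subgroup.subset_closure ⟨i, rfl⟩

theorem wp_mem (D : RootSystemWithBase V) (L : List (Fin D.l)) : D.wordProd L ∈ D.W := by
  induction L with
  | nil => rw [wp_nil]; exact one_mem _
  | cons i L ih => rw [wp_cons]; exact mul_mem (D.s_mem i) ih

theorem wp_reverse (D : RootSystemWithBase V) (L : List (Fin D.l)) :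
    D.wordProd L.reverse = (D.wordProd L)⁻¹ := by
  induction L with
  | nil => simp [wp_nil]
  | cons i L ih => rw [List.reverse_cons, wp_snoc, wp_cons, ih, mul_inv_rev, s_inv]

theorem exists_word (D : RootSystemWithBase V) {w : V ≃ₗ[ℝ] V} (hw : w ∈ D.W) :
    ∃ L, D.wordProd L = w := by
  unfold W at hw
  induction hw using Subgroup.closure_induction with
  | mem x hx => obtain ⟨i, rfl⟩ := hx; exact ⟨[i], by simp [wordProd]⟩
  | one => exact ⟨[], D.wp_nil⟩
  | mul x y _ _ hx hy =>
    obtain ⟨L, rfl⟩ := hx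
    obtain ⟨L', rfl⟩ := hy
    exact ⟨L ++ L', D.wp_append _ _⟩
  | inv x _ hx =>
    obtain ⟨L, rfl⟩ := hx
    exact ⟨L.reverse, D.wp_reverse L⟩

theorem W_inner (D : RootSystemWithBase V) {w : V ≃ₗ[ℝ] V} (hw : w ∈ D.W) (u v : V) :
    ⟪w u, w v⟫ = ⟪u, v⟫ := by
  obtain ⟨L, rfl⟩ := D.exists_word hw
  induction L with
  | nil => simp [wp_nil]
  | cons i L ih =>
    rw [wp_cons, LinearEquiv.mul_apply, LinearEquiv.mul_apply, s_inner]
    exact ih (D.wp_mem L)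

theorem W_root (D : RootSystemWithBase V) {w : V ≃ₗ[ℝ] V} (hw : w ∈ D.W) {β : V}
    (hβ : β ∈ D.Φ) : w β ∈ D.Φ := by
  obtain ⟨L, rfl⟩ := D.exists_word hw
  induction L with
  | nil => simpa [wp_nil] using hβ
  | cons i L ih =>
    rw [wp_cons, LinearEquiv.mul_apply]
    exact D.s_root _ (ih (D.wp_mem L)) i

theorem inv_apply_self' (w : V ≃ₗ[ℝ] V) (v : V) : w (w⁻¹ v) = v := by
  rw [← LinearEquiv.mul_apply, mul_inv_cancel]; rfl

theorem inv_self_apply' (w : V ≃ₗ[ℝ] V) (v : V) : w⁻¹ (w v) = v := by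
  rw [← LinearEquiv.mul_apply, inv_mul_cancel]; rfl

theorem W_inner_inv (D : RootSystemWithBase V) {w : V ≃ₗ[ℝ] V} (hw : w ∈ D.W) (u v : V) :
    ⟪w u, v⟫ = ⟪u, w⁻¹ v⟫ := by
  conv_lhs => rw [← inv_apply_self' w v]
  exact D.W_inner hw _ _

theorem W_pairing (D : RootSystemWithBase V) {w : V ≃ₗ[ℝ] V} (hw : w ∈ D.W) (u v : V) :
    D.pairing (w u) (w v) = D.pairing u v := by
  simp only [pairing, D.W_inner hw]

theorem W_minuscule (D : RootSystemWithBase V) {ω : V} (hmin : D.IsMinuscule ω)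
    {w : V ≃ₗ[ℝ] V} (hw : w ∈ D.W) (i : Fin D.l) :
    D.pairing (w ω) (D.α i) = -1 ∨ D.pairing (w ω) (D.α i) = 0 ∨
      D.pairing (w ω) (D.α i) = 1 := by
  have h := hmin.2 (w⁻¹ (D.α i)) (D.W_root (inv_mem hw) (D.α_mem i))
  rwa [← D.W_pairing hw, inv_apply_self'] at h

/-- `s_i` permutes the positive roots other than `α_i`. -/
theorem s_pos (D : RootSystemWithBase V) (i : Fin D.l) {β : V} (hβ : β ∈ D.Φ)
    (hp : ∀ j, 0 ≤ D.B.repr β j) (hne : β ≠ D.α i) : ∀ j, 0 ≤ D.B.repr (D.s i β) j := by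
  rcases D.root_sign (D.s_root β hβ i) with h | h
  · exact h
  exfalso
  have hz : ∀ j, j ≠ i → D.B.repr β j = 0 := by
    intro j hj
    have h1 := h j
    rw [s_pair, map_sub, map_smul, Finsupp.sub_apply, Finsupp.smul_apply, repr_α,
      if_neg (Ne.symm hj)] at h1
    have := hp j
    simp at h1
    linarith
  have hβ' : β = D.B.repr β i • D.α i := by
    conv_lhs => rw [D.sum_repr' β]
    rw [Finset.sum_eq_single i]
    · intro j _ hj; rw [hz j hj, zero_smul]
    · simp
  rcases D.reduced _ (D.α_mem i) (D.B.repr β i) (hβ' ▸ hβ) with h1 | h1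
  · rw [h1, one_smul] at hβ'; exact hne hβ'
  · have := hp i; linarith

theorem exchange (D : RootSystemWithBase V) (i : Fin D.l) (L : List (Fin D.l))
    (h : ¬ ∀ j, 0 ≤ D.B.repr (D.wordProd L (D.α i)) j) :
    ∃ L', L'.length + 1 = L.length ∧ D.wordProd L * D.s i = D.wordProd L' := by
  induction L with
  | nil =>
    exfalso; apply h; intro j
    rw [wp_nil, LinearEquiv.coe_one, id, repr_α]
    split_ifs <;> norm_num
  | cons k L ih =>
    by_cases hL : ∀ j, 0 ≤ D.B.repr (D.wordProd L (D.α i)) j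
    · have he : D.wordProd L (D.α i) = D.α k := by
        by_contra hne
        apply h
        rw [wp_cons, LinearEquiv.mul_apply]
        exact D.s_pos k (D.W_root (D.wp_mem L) (D.α_mem i)) hL hne
      refine ⟨L, rfl, ?_⟩
      ext v
      rw [wp_cons, LinearEquiv.mul_apply, LinearEquiv.mul_apply, D.s_pair k, ← he,
        D.W_pairing (D.wp_mem L), ← map_smul, ← map_sub]
      have h2 := D.s_s i v
      rw [D.s_pair i (D.s i v)] at h2
      rw [h2]
    · obtain ⟨L', h1, h2⟩ := ih hL
      refine ⟨k :: L', by simp [h1], ?_⟩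
      rw [wp_cons, wp_cons, mul_assoc, h2]

theorem len_le (D : RootSystemWithBase V) (L : List (Fin D.l)) :
    D.len (D.wordProd L) ≤ L.length := Nat.sInf_le ⟨L, rfl, rfl⟩

theorem exists_len (D : RootSystemWithBase V) {w : V ≃ₗ[ℝ] V} (hw : w ∈ D.W) :
    ∃ L, L.length = D.len w ∧ D.wordProd L = w := by
  obtain ⟨L, hL⟩ := D.exists_word hw
  exact Nat.sInf_mem (s := {k | ∃ L : List (Fin D.l), L.length = k ∧ D.wordProd L = w})
    ⟨_, L, rfl, hL⟩

theorem eq_one (D : RootSystemWithBase V) {z : V ≃ₗ[ℝ] V} (hz : z ∈ D.W)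
    (h : ∀ i j, 0 ≤ D.B.repr (z (D.α i)) j) : z = 1 := by
  obtain ⟨L, hL, rfl⟩ := D.exists_len hz
  rcases List.eq_nil_or_concat' L with rfl | ⟨L, i, rfl⟩
  · exact D.wp_nil
  exfalso
  have h1 : ¬ ∀ j, 0 ≤ D.B.repr (D.wordProd L (D.α i)) j := by
    intro h2
    have h0 : D.wordProd L (D.α i) = 0 := by
      apply D.B.repr.injective
      ext j
      have h3 := h i j
      rw [wp_snoc, LinearEquiv.mul_apply, s_α, map_neg, map_neg, Finsupp.neg_apply] at h3
      have := h2 j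
      rw [map_zero, Finsupp.zero_apply]
      linarith
    exact D.root_ne_zero _ (D.W_root (D.wp_mem L) (D.α_mem i)) h0
  obtain ⟨L', h2, h3⟩ := D.exchange i L h1
  rw [wp_snoc, h3] at hL
  have := D.len_le L'
  simp at hL
  omega

theorem inner_α_of_pairing (D : RootSystemWithBase V) (v : V) (i : Fin D.l) :
    ⟪v, D.α i⟫ = D.pairing v (D.α i) * (⟪D.α i, D.α i⟫ / 2) := by
  have h := (D.α_inner_pos i).ne'
  unfold pairing
  field_simp

theorem dom_inner (D : RootSystemWithBase V) {ω : V} (hd : D.IsDominant ω) (i : Fin D.l) :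
    0 ≤ ⟪ω, D.α i⟫ := by
  rw [inner_α_of_pairing]
  exact mul_nonneg (hd i) (half_pos (D.α_inner_pos i)).le

theorem inner_expand (D : RootSystemWithBase V) (ω v : V) :
    ⟪ω, v⟫ = ∑ i, D.B.repr v i * ⟪ω, D.α i⟫ := by
  conv_lhs => rw [D.sum_repr' v]
  simp only [inner_sum, real_inner_smul_right]

theorem WI_levi (D : RootSystemWithBase V) {ω : V} (hd : D.IsDominant ω)
    {x : V ≃ₗ[ℝ] V} (hx : x ∈ D.WI ω) {γ : V} (hγ : ∀ i, 0 ≤ D.B.repr γ i)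
    (h0 : ⟪ω, γ⟫ = 0) : ∀ j, 0 ≤ D.B.repr (x γ) j := by
  rw [inner_expand, Finset.sum_eq_zero_iff_of_nonneg
    (fun i _ => mul_nonneg (hγ i) (D.dom_inner hd i))] at h0
  intro j
  rw [D.sum_repr' γ, map_sum, map_sum, Finsupp.finsetSum_apply]
  refine Finset.sum_nonneg fun i _ => ?_
  rw [map_smul, map_smul, Finsupp.smul_apply, smul_eq_mul]
  rcases mul_eq_zero.1 (h0 i (Finset.mem_univ i)) with h | h
  · rw [h, zero_mul]
  · refine mul_nonneg (hγ i) ?_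
    have : D.pairing ω (D.α i) = 0 := by simp [pairing, h]
    exact (D.nonneg_iff _).1 (hx.2 i this).1 j

theorem WI_unique (D : RootSystemWithBase V) {ω : V} (hd : D.IsDominant ω)
    {x y : V ≃ₗ[ℝ] V} (hx : x ∈ D.WI ω) (hy : y ∈ D.WI ω) (h : x ω = y ω) : x = y := by
  have hz : x⁻¹ * y ∈ D.W := mul_mem (inv_mem hx.1) hy.1
  have hzω : (x⁻¹ * y) ω = ω := by
    rw [LinearEquiv.mul_apply, ← h, inv_self_apply']
  suffices x⁻¹ * y = 1 from (inv_mul_eq_one.1 this)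
  refine D.eq_one hz fun i => ?_
  rcases D.root_sign (D.W_root hz (D.α_mem i)) with hp | hn
  · exact hp
  exfalso
  have e1 : ⟪ω, (x⁻¹ * y) (D.α i)⟫ = ⟪ω, D.α i⟫ := by
    conv_lhs => rw [← hzω]
    exact D.W_inner hz _ _
  have e2 : ⟪ω, (x⁻¹ * y) (D.α i)⟫ ≤ 0 := by
    rw [inner_expand]
    exact Finset.sum_nonpos fun j _ =>
      mul_nonpos_of_nonpos_of_nonneg (hn j) (D.dom_inner hd j)
  have e3 : ⟪ω, D.α i⟫ = 0 := le_antisymm (e1 ▸ e2) (D.dom_inner hd i)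
  have p1 : ∀ j, 0 ≤ D.B.repr (y (D.α i)) j :=
    (D.nonneg_iff _).1 (hy.2 i (by simp [pairing, e3])).1
  have p2 : ∀ j, 0 ≤ D.B.repr (x (-((x⁻¹ * y) (D.α i)))) j := by
    apply D.WI_levi hd hx
    · intro j; rw [map_neg, Finsupp.neg_apply]; have := hn j; linarith
    · rw [inner_neg_right, e1, e3, neg_zero]
  have e4 : x (-((x⁻¹ * y) (D.α i))) = - y (D.α i) := by
    rw [map_neg, LinearEquiv.mul_apply, inv_apply_self']
  rw [e4] at p2
  apply D.root_ne_zero _ (D.W_root hy.1 (D.α_mem i))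
  apply D.B.repr.injective
  ext j
  have a := p1 j
  have b := p2 j
  rw [map_neg, Finsupp.neg_apply] at b
  rw [map_zero, Finsupp.zero_apply]
  linarith

theorem WI_step (D : RootSystemWithBase V) {ω : V}
    {x : V ≃ₗ[ℝ] V} (hx : x ∈ D.WI ω) (i : Fin D.l) (h : D.pairing (x ω) (D.α i) ≠ 0) :
    D.s i * x ∈ D.WI ω := by
  refine ⟨mul_mem (D.s_mem i) hx.1, fun j hj => ?_⟩
  have hr := D.W_root hx.1 (D.α_mem j)
  refine ⟨(D.nonneg_iff _).2 ?_, D.root_ne_zero _ (D.s_root _ hr i)⟩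
  refine D.s_pos i hr ((D.nonneg_iff _).1 (hx.2 j hj).1) fun he => h ?_
  have he' : x (D.α j) = D.α i := he
  rw [← he', D.W_pairing hx.1, hj]

theorem one_mem_WI (D : RootSystemWithBase V) (ω : V) : 1 ∈ D.WI ω := by
  refine ⟨one_mem _, fun i _ => ⟨(D.nonneg_iff _).2 fun j => ?_, D.root_ne_zero _ (D.α_mem i)⟩⟩
  rw [LinearEquiv.coe_one, id, repr_α]
  split_ifs <;> norm_num

theorem chain (D : RootSystemWithBase V) {ω : V} (hmin : D.IsMinuscule ω) (N : ℕ) :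
    ∀ x ∈ D.WI ω, ∀ y ∈ D.WI ω, ∀ k : Fin D.l → ℕ,
      x ω - y ω = ∑ i, (k i : ℝ) • D.α i → ∑ i, k i = N →
      ∃ L : List (Fin D.l), L.length = N ∧ y = D.wordProd L * x := by
  induction N with
  | zero =>
    intro x hx y hy k hk hN
    refine ⟨[], rfl, ?_⟩
    rw [wp_nil, one_mul]
    refine (D.WI_unique hmin.1 hx hy ?_).symm
    rw [← sub_eq_zero, hk]
    refine Finset.sum_eq_zero fun i hi => ?_
    rw [Finset.sum_eq_zero_iff.1 hN i hi]; simp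
  | succ N ih =>
    intro x hx y hy k hk hN
    have hne : x ω - y ω ≠ 0 := by
      intro h0
      have : ∀ i, k i = 0 := by
        intro i
        have := D.repr_sum (fun i => (k i : ℝ)) i
        rw [← hk, h0] at this
        simp at this
        exact_mod_cast this.symm
      simp [this] at hN
    have hpos := real_inner_self_pos.2 hne
    have hex : ∃ i, 0 < (k i : ℝ) * ⟪x ω - y ω, D.α i⟫ := by
      by_contra hcon
      push Not at hcon
      have : ⟪x ω - y ω, x ω - y ω⟫ = ∑ i, (k i : ℝ) * ⟪x ω - y ω, D.α i⟫ := by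
        conv_lhs => arg 3; rw [hk]
        simp only [inner_sum, real_inner_smul_right]
      have h2 := Finset.sum_nonpos fun i (_ : i ∈ Finset.univ) => hcon i
      linarith
    obtain ⟨i, hi⟩ := hex
    have hki : 0 < k i := by
      rcases Nat.eq_zero_or_pos (k i) with h | h
      · rw [h] at hi; simp at hi
      · exact h
    have hin : 0 < ⟪x ω - y ω, D.α i⟫ := by
      by_contra hcon
      push Not at hcon
      have := mul_nonpos_of_nonneg_of_nonpos (Nat.cast_nonneg (α := ℝ) (k i)) hcon
      linarith
    have hpp : D.pairing (y ω) (D.α i) < D.pairing (x ω) (D.α i) := by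
      rw [inner_sub_left, D.inner_α_of_pairing (x ω), D.inner_α_of_pairing (y ω), ← sub_mul] at hin
      have := pos_of_mul_pos_left hin (half_pos (D.α_inner_pos i)).le
      linarith
    set k' : Fin D.l → ℕ := fun j => if j = i then k j - 1 else k j with hk'
    have hkk : ∀ j, k j = k' j + if j = i then 1 else 0 := by
      intro j
      simp only [hk']
      split_ifs with h
      · subst h; omega
      · rfl
    have hsum : ∑ j, k' j = N := by
      have : ∑ j, k j = ∑ j, k' j + 1 := by
        rw [Finset.sum_congr rfl fun j _ => hkk j, Finset.sum_add_distrib]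
        simp
      omega
    have hvec : ∑ j, (k j : ℝ) • D.α j = ∑ j, (k' j : ℝ) • D.α j + D.α i := by
      rw [Finset.sum_congr rfl fun j _ => by rw [hkk j]]
      simp [add_smul, Finset.sum_add_distrib]
    rw [hvec] at hk
    have hcase : D.pairing (x ω) (D.α i) = 1 ∨ D.pairing (y ω) (D.α i) = -1 := by
      rcases D.W_minuscule hmin hx.1 i with h | h | h <;>
      rcases D.W_minuscule hmin hy.1 i with h' | h' | h' <;>
      rw [h, h'] at hpp <;> norm_num at hpp <;> simp [h, h']
    rcases hcase with h | h
    · obtain ⟨L, hL, hyL⟩ := ih _ (D.WI_step hx i (by rw [h]; norm_num)) y hy k' (by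
        rw [LinearEquiv.mul_apply, s_pair, h, one_smul, sub_right_comm, hk]; abel) hsum
      exact ⟨L ++ [i], by simp [hL], by rw [hyL, wp_snoc, mul_assoc]⟩
    · obtain ⟨L, hL, hyL⟩ := ih x hx _ (D.WI_step hy i (by rw [h]; norm_num)) k' (by
        rw [LinearEquiv.mul_apply, s_pair, h, neg_one_smul, sub_neg_eq_add, ← sub_sub, hk]
        abel) hsum
      refine ⟨i :: L, by simp [hL], ?_⟩
      rw [wp_cons, mul_assoc, ← hyL, ← mul_assoc, s_mul_s, one_mul]

theorem height_le (D : RootSystemWithBase V) {ω : V} (hmin : D.IsMinuscule ω)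
    {x : V ≃ₗ[ℝ] V} (hx : x ∈ D.W) (L : List (Fin D.l)) :
    ∑ i, D.B.repr (x ω - (D.wordProd L * x) ω) i ≤ L.length := by
  induction L with
  | nil => simp [wp_nil]
  | cons j L ih =>
    have hm := D.W_minuscule hmin (mul_mem (D.wp_mem L) hx) j
    have e : x ω - (D.wordProd (j :: L) * x) ω = (x ω - (D.wordProd L * x) ω) +
        D.pairing ((D.wordProd L * x) ω) (D.α j) • D.α j := by
      rw [wp_cons, mul_assoc, LinearEquiv.mul_apply, s_pair]; abel
    have e2 : ∑ i, D.B.repr (D.pairing ((D.wordProd L * x) ω) (D.α j) • D.α j) i =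
        D.pairing ((D.wordProd L * x) ω) (D.α j) := by
      simp [repr_α]
    rw [e]
    simp only [map_add, Finsupp.add_apply, Finset.sum_add_distrib]
    rw [e2, List.length_cons, Nat.cast_add, Nat.cast_one]
    rcases hm with h | h | h <;> rw [h] <;> linarith

theorem len_eq (D : RootSystemWithBase V) {ω : V} (hmin : D.IsMinuscule ω)
    {x y : V ≃ₗ[ℝ] V} (hx : x ∈ D.WI ω) (hy : y ∈ D.WI ω) (k : Fin D.l → ℕ)
    (hk : x ω - y ω = ∑ i, (k i : ℝ) • D.α i) : D.len (y * x⁻¹) = ∑ i, k i := by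
  apply le_antisymm
  · obtain ⟨L, hL, h⟩ := D.chain hmin _ x hx y hy k hk rfl
    have := D.len_le L
    rwa [hL, eq_mul_inv_iff_mul_eq.2 h.symm] at this
  · obtain ⟨L, hL, h⟩ := D.exists_len (mul_mem hy.1 (inv_mem hx.1))
    have h2 := D.height_le hmin hx.1 L
    rw [h, inv_mul_cancel_right, hk, hL] at h2
    rw [Finset.sum_congr rfl fun i _ => D.repr_sum (fun i => (k i : ℝ)) i] at h2
    exact_mod_cast h2

theorem dom_max (D : RootSystemWithBase V) {ω : V} (hd : D.IsDominant ω) (n : ℕ) :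
    ∀ L : List (Fin D.l), L.length = n → ∀ j, 0 ≤ D.B.repr (ω - D.wordProd L ω) j := by
  induction n using Nat.strong_induction_on with
  | _ n ih =>
    intro L hL
    rcases List.eq_nil_or_concat' L with rfl | ⟨L, i, rfl⟩
    · simp [wp_nil]
    simp at hL
    by_cases h : ∀ j, 0 ≤ D.B.repr (D.wordProd L (D.α i)) j
    · intro j
      have e : ω - D.wordProd (L ++ [i]) ω = (ω - D.wordProd L ω) +
          D.pairing ω (D.α i) • D.wordProd L (D.α i) := by
        rw [wp_snoc, LinearEquiv.mul_apply, s_pair, map_sub, map_smul]; abel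
      rw [e, map_add, map_smul, Finsupp.add_apply, Finsupp.smul_apply, smul_eq_mul]
      exact add_nonneg (ih L.length (by omega) L rfl j) (mul_nonneg (hd i) (h j))
    · obtain ⟨L', h1, h2⟩ := D.exchange i L h
      rw [wp_snoc, h2]
      exact ih L'.length (by omega) L' rfl

theorem lattice (D : RootSystemWithBase V) {ω : V} (hmin : D.IsMinuscule ω)
    (L : List (Fin D.l)) (j : Fin D.l) :
    ∃ z : ℤ, D.B.repr (ω - D.wordProd L ω) j = z := by
  induction L with
  | nil => exact ⟨0, by simp [wp_nil]⟩
  | cons i L ih =>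
    obtain ⟨z, hz⟩ := ih
    have e : ω - D.wordProd (i :: L) ω = (ω - D.wordProd L ω) +
        D.pairing (D.wordProd L ω) (D.α i) • D.α i := by
      rw [wp_cons, LinearEquiv.mul_apply, s_pair]; abel
    rw [e, map_add, map_smul, Finsupp.add_apply, Finsupp.smul_apply, smul_eq_mul, hz, repr_α]
    rcases D.W_minuscule hmin (D.wp_mem L) i with h | h | h <;> rw [h] <;> split_ifs
    · exact ⟨z - 1, by push_cast; ring⟩
    · exact ⟨z, by ring⟩
    · exact ⟨z, by ring⟩
    · exact ⟨z, by ring⟩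
    · exact ⟨z + 1, by push_cast; ring⟩
    · exact ⟨z, by ring⟩

end RootSystemWithBase

/-- Let `ω = ∑ m i • α i` be a minuscule weight with nonnegative
rational coefficients and `τ` the unique element of `W^I` with
`τ(ω) = ∑ (m i − ⌊m i⌋) • α i`.  If `σ ∈ W^I` satisfies `σ(nω) ≥ 0` for some positive
integer `n`, then `σ ≤ τ`, that is, `ℓ(τ) = ℓ(σ) + ℓ(τ σ⁻¹)`. -/
theorem stmt9 {V : Type*} [NormedAddCommGroup V] [InnerProductSpace ℝ V]
    (D : RootSystemWithBase V) (m : Fin D.l → ℚ) (hm : ∀ i, 0 ≤ m i)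
    (ω : V) (hω : ω = ∑ i, (m i : ℝ) • D.α i) (hmin : D.IsMinuscule ω)
    (τ : V ≃ₗ[ℝ] V) (hτI : τ ∈ D.WI ω)
    (hτω : τ ω = ∑ i, ((m i : ℝ) - ((⌊m i⌋ : ℤ) : ℝ)) • D.α i)
    (σ : V ≃ₗ[ℝ] V) (hσ : σ ∈ D.WI ω)
    (n : ℕ) (hn : 0 < n) (hpos : D.vle 0 (σ ((n : ℝ) • ω))) :
    D.len τ = D.len σ + D.len (τ * σ⁻¹) := by
  obtain ⟨L, hL⟩ := D.exists_word hσ.1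
  have hnn : ∀ j, 0 ≤ D.B.repr (ω - σ ω) j := by
    rw [← hL]; exact D.dom_max hmin.1 _ L rfl
  have hz : ∀ j, ∃ z : ℤ, D.B.repr (ω - σ ω) j = z := by
    rw [← hL]; exact D.lattice hmin L
  choose z hz using hz
  have hz0 : ∀ j, 0 ≤ z j := fun j => by
    have := hnn j; rw [hz] at this; exact_mod_cast this
  have hσnn : ∀ j, 0 ≤ D.B.repr (σ ω) j := by
    intro j
    have h := (D.nonneg_iff _).1 hpos j
    rw [sub_zero, map_smul, map_smul, Finsupp.smul_apply, smul_eq_mul] at h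
    exact nonneg_of_mul_nonneg_right h (by exact_mod_cast hn)
  have hωr : ∀ j, D.B.repr ω j = m j := fun j => by
    rw [hω]; exact D.repr_sum (fun i => (m i : ℝ)) j
  have hzm : ∀ j, z j ≤ ⌊m j⌋ := by
    intro j
    rw [Int.le_floor]
    have h1 := hz j
    rw [map_sub, Finsupp.sub_apply, hωr] at h1
    have h2 := hσnn j
    have : (z j : ℝ) ≤ (m j : ℝ) := by linarith
    exact_mod_cast this
  have hf0 : ∀ j, 0 ≤ ⌊m j⌋ := fun j => Int.floor_nonneg.2 (hm j)
  have e1 : ω - σ ω = ∑ i, (z i : ℝ) • D.α i := by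
    rw [D.sum_repr' (ω - σ ω)]
    exact Finset.sum_congr rfl fun i _ => by rw [hz]
  have e2 : ω - τ ω = ∑ i, ((⌊m i⌋ : ℤ) : ℝ) • D.α i := by
    rw [hτω]; conv_lhs => rw [hω]
    rw [← Finset.sum_sub_distrib]
    exact Finset.sum_congr rfl fun i _ => by rw [← sub_smul, sub_sub_cancel]
  have c : ∀ a : ℤ, 0 ≤ a → ((a.toNat : ℕ) : ℝ) = (a : ℝ) := fun a ha => by
    exact_mod_cast congrArg (Int.cast : ℤ → ℝ) (Int.toNat_of_nonneg ha)
  have l1 := D.len_eq hmin (D.one_mem_WI ω) hσ (fun i => (z i).toNat) (by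
    rw [LinearEquiv.coe_one, id, e1]
    exact Finset.sum_congr rfl fun i _ => by rw [c _ (hz0 i)])
  have l2 := D.len_eq hmin (D.one_mem_WI ω) hτI (fun i => ⌊m i⌋.toNat) (by
    rw [LinearEquiv.coe_one, id, e2]
    exact Finset.sum_congr rfl fun i _ => by rw [c _ (hf0 i)])
  have l3 := D.len_eq hmin hσ hτI (fun i => (⌊m i⌋ - z i).toNat) (by
    rw [← sub_sub_sub_cancel_left (τ ω) (σ ω) ω, e1, e2, ← Finset.sum_sub_distrib]
    exact Finset.sum_congr rfl fun i _ => by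
      rw [c _ (sub_nonneg.2 (hzm i)), ← sub_smul]; push_cast; rfl)
  rw [inv_one, mul_one] at l1 l2
  rw [l1, l2, l3, ← Finset.sum_add_distrib]
  refine Finset.sum_congr rfl fun i _ => ?_
  have := hz0 i
  have := hzm i
  omega
end

section
/- Let 2 ≤ r ≤ n−2 and let w, τ ∈ W^{I_r} be written in canonical form w = (s_{a_i}·s_{a_i−1}⋯s_i)·(s_{a_{i+1}}⋯s_{i+1})⋯(s_{a_r}⋯s_r) and τ = (s_{b_k}·s_{b_k−1}⋯s_k)·(s_{b_{k+1}}⋯s_{k+1})⋯(s_{b_r}⋯s_r), where 1 ≤ i ≤ r, a_i < a_{i+1} < ⋯ < a_r, j ≤ a_j ≤ n−1 for i ≤ j ≤ r, ℓ(w) = Σ_{j=i}^r (a_j − j + 1), and similarly 1 ≤ k ≤ r, b_k < ⋯ < b_r, j ≤ b_j ≤ n−1 for k ≤ j ≤ r, ℓ(τ) = Σ_{j=k}^r (b_j − j + 1). Then w ≤ τ if and only if k ≤ i and b_j ≥ a_j for all j with i ≤ j ≤ r. -/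
/-!  Setting: `W = S_N`, the symmetric group of `{1, …, N}`, acting on `ℝ^N` by
permuting coordinates (`w · e_i = e_{w(i)}`).  Vectors, roots and indices are written
1-based: `stdE N j` is the standard basis vector `e_j` (for `1 ≤ j ≤ N`),
`sroot N i = α_i = e_i − e_{i+1}` is the `i`-th simple root (for `1 ≤ i ≤ N−1`), and
`sTrans N i = s_i` is the adjacent transposition `(i, i+1)`. -/

namespace SnPaper

/-- The standard basis vector `e_j` of `ℝ^N` (1-based; junk value `0` out of range). -/
noncomputable def stdE (N j : ℕ) : Fin N → ℝ :=
  if h : 1 ≤ j ∧ j ≤ N then Pi.single (⟨j - 1, by omega⟩ : Fin N) 1 else 0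

/-- The simple root `α_i = e_i − e_{i+1}`. -/
noncomputable def sroot (N i : ℕ) : Fin N → ℝ := stdE N i - stdE N (i + 1)

/-- The adjacent transposition `s_i = (i, i+1)` (1-based; junk value `1` out of range). -/
def sTrans (N i : ℕ) : Equiv.Perm (Fin N) :=
  if h : 1 ≤ i ∧ i + 1 ≤ N then
    Equiv.swap (⟨i - 1, by omega⟩ : Fin N) (⟨i, by omega⟩ : Fin N)
  else 1

/-- The action of `w ∈ S_N` on `ℝ^N` permuting coordinates: `w · e_i = e_{w(i)}`. -/
def permAct (N : ℕ) (w : Equiv.Perm (Fin N)) (v : Fin N → ℝ) : Fin N → ℝ := v ∘ w.symm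

/-- `v` is a combination of the simple roots `α_1, …, α_{N−1}` with all
coefficients `≥ 0`. -/
def IsNonnegComb (N : ℕ) (v : Fin N → ℝ) : Prop :=
  ∃ c : ℕ → ℝ, (∀ i, 0 ≤ c i) ∧ v = ∑ i ∈ Finset.Icc 1 (N - 1), c i • sroot N i

/-- `v > 0`: a nonzero nonnegative combination of the simple roots. -/
def IsPos (N : ℕ) (v : Fin N → ℝ) : Prop := IsNonnegComb N v ∧ v ≠ 0

/-- `x ≤ y` for vectors: `y − x` is a nonnegative combination of the simple roots. -/
def vle (N : ℕ) (x y : Fin N → ℝ) : Prop := IsNonnegComb N (y - x)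

/-- The Coxeter length `ℓ(w)`: the least `k` such that `w` is a product of `k` adjacent
transpositions `s_i`, `1 ≤ i ≤ N−1`. -/
noncomputable def len (N : ℕ) (w : Equiv.Perm (Fin N)) : ℕ :=
  sInf {k | ∃ L : List ℕ, (∀ i ∈ L, 1 ≤ i ∧ i ≤ N - 1) ∧ L.length = k ∧
    (L.map (sTrans N)).prod = w}

/-- `w ≤ τ` in `W`:  `ℓ(τ) = ℓ(w) + ℓ(τ w⁻¹)`. -/
def wle (N : ℕ) (w τ : Equiv.Perm (Fin N)) : Prop :=
  len N τ = len N w + len N (τ * w⁻¹)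

/-- `W^{I_r} = {w ∈ W : w(α_j) > 0 for all j ≠ r}`. -/
def WIr (N r : ℕ) : Set (Equiv.Perm (Fin N)) :=
  {w | ∀ j, 1 ≤ j → j ≤ N - 1 → j ≠ r → IsPos N (permAct N w (sroot N j))}

/-- The block `s_a · s_{a−1} ⋯ s_j` of consecutive simple reflections. -/
def block (N j a : ℕ) : Equiv.Perm (Fin N) :=
  ((List.range' j (a + 1 - j)).reverse.map (sTrans N)).prod

/-- The canonical form `(s_{a_i} ⋯ s_i) · (s_{a_{i+1}} ⋯ s_{i+1}) ⋯ (s_{a_r} ⋯ s_r)`. -/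
def canonForm (N i r : ℕ) (a : ℕ → ℕ) : Equiv.Perm (Fin N) :=
  ((List.range' i (r + 1 - i)).map fun j => block N j (a j)).prod

/-- The fundamental weight `ω_r = e_1 + ⋯ + e_r − (r/N)(e_1 + ⋯ + e_N)`. -/
noncomputable def fundWeight (N r : ℕ) : Fin N → ℝ :=
  (∑ i ∈ Finset.Icc 1 r, stdE N i) - ((r : ℝ) / (N : ℝ)) • ∑ i ∈ Finset.Icc 1 N, stdE N i

end SnPaper

namespace SnPaper


theorem sTrans_fix (n c : ℕ) (p : Fin n) (h1 : p.val + 1 ≠ c) (h2 : p.val ≠ c) :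
    sTrans n c p = p := by
  unfold sTrans
  split_ifs with h
  · apply Equiv.swap_apply_of_ne_of_ne
    · intro e; rw [Fin.ext_iff] at e; simp at e; omega
    · intro e; rw [Fin.ext_iff] at e; simp at e; omega
  · rfl

theorem sTrans_up (n c : ℕ) (p : Fin n) (h1 : p.val + 1 = c) (h2 : c + 1 ≤ n) :
    (sTrans n c p).val = c := by
  unfold sTrans
  rw [dif_pos ⟨by omega, h2⟩]
  have hx : ∀ q : Fin n, q = p → ∀ t, (Equiv.swap q t p) = t := by
    rintro q rfl t; exact Equiv.swap_apply_left _ _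
  rw [hx _ (by apply Fin.ext; simp; omega)]

theorem sTrans_down (n c : ℕ) (p : Fin n) (h1 : p.val = c) (h2 : 1 ≤ c) :
    (sTrans n c p).val + 1 = c := by
  unfold sTrans
  rw [dif_pos ⟨h2, by omega⟩]
  have hx : ∀ q : Fin n, q = p → ∀ t, (Equiv.swap t q p) = t := by
    rintro q rfl t; exact Equiv.swap_apply_right _ _
  rw [hx _ (by apply Fin.ext; simp; omega)]; simp; omega

theorem sTrans_comm (n c d : ℕ) (h : c + 2 ≤ d) : Commute (sTrans n c) (sTrans n d) := by
  unfold sTrans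
  split_ifs with h1 h2
  · apply Equiv.Perm.Disjoint.commute
    intro x
    by_cases hx : x.val + 1 = c ∨ x.val = c
    · right
      apply Equiv.swap_apply_of_ne_of_ne <;>
      · intro e; rw [Fin.ext_iff] at e; simp at e; omega
    · left
      apply Equiv.swap_apply_of_ne_of_ne <;>
      · intro e; rw [Fin.ext_iff] at e; simp at e; omega
  all_goals simp

theorem block_empty (n j a : ℕ) (h : a < j) : block n j a = 1 := by
  unfold block
  have : a + 1 - j = 0 := by omega
  simp [this]

theorem block_succ (n j a : ℕ) (h : j ≤ a + 1) :
    block n j (a + 1) = sTrans n (a + 1) * block n j a := by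
  unfold block
  have : a + 1 + 1 - j = (a + 1 - j) + 1 := by omega
  rw [this, List.range'_concat]
  simp
  congr 1; omega

theorem block_split (n j a : ℕ) (h : j ≤ a + 1) : ∀ d,
    block n j (a + d) = block n (a + 1) (a + d) * block n j a := by
  intro d
  induction d with
  | zero => rw [block_empty n (a + 1) (a + 0) (by omega)]; simp
  | succ d ih =>
    rw [← add_assoc, block_succ n j (a + d) (by omega), ih,
      block_succ n (a + 1) (a + d) (by omega), mul_assoc]

theorem block_fix (n j : ℕ) (p : Fin n) : ∀ a, (p.val + 1 < j ∨ a < p.val) →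
    block n j a p = p := by
  intro a
  induction a with
  | zero =>
    intro h
    by_cases hj : j = 0
    · subst hj
      simp only [block]
      simp
      exact sTrans_fix n 0 p (by omega) (by omega)
    · rw [block_empty n j 0 (by omega)]; rfl
  | succ a ih =>
    intro h
    by_cases hj : j ≤ a + 1
    · rw [block_succ n j a hj, Equiv.Perm.mul_apply, ih (by omega)]
      exact sTrans_fix _ _ _ (by omega) (by omega)
    · rw [block_empty n j _ (by omega)]; rfl

theorem block_top (n j : ℕ) (p : Fin n) (hp : p.val + 1 = j) : ∀ d, p.val + d + 1 ≤ n →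
    (block n j (p.val + d) p).val = p.val + d := by
  intro d
  induction d with
  | zero => intro _; rw [block_empty n j _ (by omega)]; rfl
  | succ d ih =>
    intro h
    rw [← add_assoc, block_succ n j _ (by omega), Equiv.Perm.mul_apply]
    exact sTrans_up _ _ _ (by rw [ih (by omega)]) (by omega)

theorem canon_zero (n : ℕ) (a : ℕ → ℕ) : canonForm n 1 0 a = 1 := by
  simp [canonForm]

theorem canon_succ (n i r : ℕ) (a : ℕ → ℕ) (h : i ≤ r + 1) :
    canonForm n i (r + 1) a = canonForm n i r a * block n (r + 1) (a (r + 1)) := by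
  unfold canonForm
  have : r + 1 + 1 - i = (r + 1 - i) + 1 := by omega
  rw [this, List.range'_concat]
  have e : i + 1 * (r + 1 - i) = r + 1 := by omega
  simp only [List.map_append, List.prod_append, e, List.map_cons, List.map_nil, List.prod_singleton]

/-- extension of `a` below `i` -/
def ext (i : ℕ) (a : ℕ → ℕ) (j : ℕ) : ℕ := if j < i then j - 1 else a j

theorem canon_ext (n i : ℕ) (a : ℕ → ℕ) (hi : 1 ≤ i) : ∀ r,
    canonForm n 1 r (ext i a) = canonForm n i r a := by
  intro r
  induction r with
  | zero =>
    have : 0 + 1 - i = 0 := by omega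
    simp [canonForm, this]
  | succ r ih =>
    rw [canon_succ n 1 r _ (by omega), ih]
    by_cases h : i ≤ r + 1
    · rw [canon_succ n i r a h]
      simp [ext, show ¬ (r + 1 < i) by omega]
    · rw [block_empty n (r + 1) _ (by simp [ext, show r + 1 < i by omega])]
      have e1 : r + 1 - i = 0 := by omega
      have e2 : r + 1 + 1 - i = 0 := by omega
      simp [canonForm, e1, e2]

theorem canon_fix (n : ℕ) (a : ℕ → ℕ) (p : Fin n) : ∀ r,
    (∀ j, 1 ≤ j → j ≤ r → a j < p.val) → canonForm n 1 r a p = p := by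
  intro r
  induction r with
  | zero => intro _; rw [canon_zero]; rfl
  | succ r ih =>
    intro h
    rw [canon_succ n 1 r a (by omega), Equiv.Perm.mul_apply,
      block_fix n _ p _ (Or.inr (h _ (by omega) le_rfl))]
    exact ih fun j h1 h2 => h j h1 (by omega)

theorem canon_val (n : ℕ) (a : ℕ → ℕ) : ∀ r,
    (∀ j, 1 ≤ j → j ≤ r → j ≤ a j + 1 ∧ a j + 1 ≤ n) →
    (∀ j j', 1 ≤ j → j < j' → j' ≤ r → a j < a j') →
    ∀ p : Fin n, p.val < r → (canonForm n 1 r a p).val = a (p.val + 1) := by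
  intro r
  induction r with
  | zero => intro _ _ p hp; omega
  | succ r ih =>
    intro h1 h2 p hp
    rw [canon_succ n 1 r a (by omega), Equiv.Perm.mul_apply]
    by_cases hpr : p.val < r
    · rw [block_fix n _ p _ (Or.inl (by omega))]
      exact ih (fun j x y => h1 j x (by omega)) (fun j j' x y z => h2 j j' x y (by omega)) p hpr
    · have e : p.val = r := by omega
      have hb := h1 (r + 1) (by omega) le_rfl
      have ht := block_top n (r + 1) p (by omega) (a (r + 1) - p.val) (by omega)
      have e2 : p.val + (a (r + 1) - p.val) = a (r + 1) := by omega
      rw [e2] at ht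
      rw [canon_fix, ht, e]
      intro j x y
      rw [ht]
      exact h2 j (r + 1) x (by omega) le_rfl

/-- words -/
def HasWord (n m : ℕ) (u : Equiv.Perm (Fin n)) : Prop :=
  ∃ L : List ℕ, (∀ i ∈ L, 1 ≤ i ∧ i ≤ n - 1) ∧ L.length = m ∧ (L.map (sTrans n)).prod = u

theorem HasWord.mul {n m m' : ℕ} {u v : Equiv.Perm (Fin n)} (h : HasWord n m u)
    (h' : HasWord n m' v) : HasWord n (m + m') (u * v) := by
  obtain ⟨L, h1, h2, h3⟩ := h
  obtain ⟨L', h1', h2', h3'⟩ := h'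
  refine ⟨L ++ L', ?_, by simp [h2, h2'], by simp [h3, h3']⟩
  intro i hi
  rcases List.mem_append.1 hi with hi | hi
  · exact h1 i hi
  · exact h1' i hi

theorem HasWord.one (n : ℕ) : HasWord n 0 1 := ⟨[], by simp, rfl, by simp⟩

theorem HasWord.len_le {n m : ℕ} {u : Equiv.Perm (Fin n)} (h : HasWord n m u) : len n u ≤ m :=
  Nat.sInf_le h

theorem HasWord.lenw {n m : ℕ} {u : Equiv.Perm (Fin n)} (h : HasWord n m u) :
    HasWord n (len n u) u :=
  Nat.sInf_mem (s := {k | HasWord n k u}) ⟨m, h⟩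

theorem block_word (n j a : ℕ) (hj : 1 ≤ j) (ha : a + 1 ≤ n) :
    HasWord n (a + 1 - j) (block n j a) := by
  refine ⟨(List.range' j (a + 1 - j)).reverse, ?_, by simp, rfl⟩
  intro i hi
  simp at hi
  omega

theorem canon_word (n : ℕ) (a : ℕ → ℕ) : ∀ r,
    (∀ j, 1 ≤ j → j ≤ r → j ≤ a j + 1 ∧ a j + 1 ≤ n) →
    HasWord n (∑ j ∈ Finset.Icc 1 r, (a j + 1 - j)) (canonForm n 1 r a) := by
  intro r
  induction r with
  | zero => intro _; rw [canon_zero]; exact HasWord.one n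
  | succ r ih =>
    intro h
    rw [canon_succ n 1 r a (by omega), Finset.sum_Icc_succ_top (by omega)]
    exact (ih fun j x y => h j x (by omega)).mul
      (block_word n _ _ (by omega) (h _ (by omega) le_rfl).2)

theorem canon_comm (n : ℕ) (a : ℕ → ℕ) (c : ℕ) : ∀ r,
    (∀ j, 1 ≤ j → j ≤ r → a j + 2 ≤ c) → Commute (canonForm n 1 r a) (sTrans n c) := by
  intro r
  induction r with
  | zero => intro _; rw [canon_zero]; exact Commute.one_left _
  | succ r ih =>
    intro h
    rw [canon_succ n 1 r a (by omega)]
    refine (ih fun j x y => h j x (by omega)).mul_left ?_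
    unfold block
    have := h (r + 1) (by omega) le_rfl
    apply Commute.list_prod_left
    intro x hx
    simp at hx
    obtain ⟨y, hy, rfl⟩ := hx
    exact sTrans_comm n y c (by omega)

theorem canon_comm_block (n : ℕ) (a : ℕ → ℕ) (r c d : ℕ)
    (h : ∀ j, 1 ≤ j → j ≤ r → a j + 2 ≤ c) : Commute (canonForm n 1 r a) (block n c d) := by
  unfold block
  apply Commute.list_prod_right
  intro x hx
  simp at hx
  obtain ⟨y, hy, rfl⟩ := hx
  exact canon_comm n a y r fun j h1 h2 => by have := h j h1 h2; omega

theorem quot_word (n : ℕ) (a b : ℕ → ℕ) : ∀ r,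
    (∀ j, 1 ≤ j → j ≤ r → j ≤ a j + 1 ∧ b j + 1 ≤ n ∧ a j ≤ b j) →
    (∀ j j', 1 ≤ j → j < j' → j' ≤ r → a j < a j') →
    ∃ u, HasWord n (∑ j ∈ Finset.Icc 1 r, (b j - a j)) u ∧
      canonForm n 1 r b = u * canonForm n 1 r a := by
  intro r
  induction r with
  | zero => intro _ _; exact ⟨1, HasWord.one n, by simp [canon_zero]⟩
  | succ r ih =>
    intro h h2
    obtain ⟨u, hu, e⟩ := ih (fun j x y => h j x (by omega))
      (fun j j' x y z => h2 j j' x y (by omega))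
    have h0 := h (r + 1) (by omega) le_rfl
    refine ⟨u * block n (a (r + 1) + 1) (b (r + 1)), ?_, ?_⟩
    · rw [Finset.sum_Icc_succ_top (by omega)]
      have := block_word n (a (r + 1) + 1) (b (r + 1)) (by omega) (by omega)
      rw [show b (r + 1) + 1 - (a (r + 1) + 1) = b (r + 1) - a (r + 1) by omega] at this
      exact hu.mul this
    · have hs := block_split n (r + 1) (a (r + 1)) (by omega) (b (r + 1) - a (r + 1))
      rw [show a (r + 1) + (b (r + 1) - a (r + 1)) = b (r + 1) by omega] at hs
      have hc := canon_comm_block n a r (a (r + 1) + 1) (b (r + 1)) (fun j x y => by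
        have := h2 j (r + 1) x (by omega) le_rfl; omega)
      rw [canon_succ n 1 r b (by omega), canon_succ n 1 r a (by omega), e, hs]
      calc u * canonForm n 1 r a * (block n (a (r + 1) + 1) (b (r + 1)) *
              block n (r + 1) (a (r + 1)))
          = u * (canonForm n 1 r a * block n (a (r + 1) + 1) (b (r + 1))) *
              block n (r + 1) (a (r + 1)) := by group
        _ = _ := by rw [hc.eq]; group

/-- sum of the first values -/
def fs (n : ℕ) (S : Finset (Fin n)) (x : Equiv.Perm (Fin n)) : ℤ :=
  ∑ p ∈ S, ((x p).val : ℤ)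

theorem fs_step (n : ℕ) (S : Finset (Fin n)) (x : Equiv.Perm (Fin n)) (c : ℕ) (h1 : 1 ≤ c)
    (h2 : c + 1 ≤ n) :
    fs n S (sTrans n c * x) ≤ fs n S x + 1 ∧
    (fs n S (sTrans n c * x) = fs n S x + 1 → ∀ p ∈ S, (x p).val ≤ ((sTrans n c * x) p).val) := by
  have key : ∀ p, (((sTrans n c * x) p).val : ℤ) = (x p).val + (if (x p).val + 1 = c then 1 else 0)
      - (if (x p).val = c then 1 else 0) := by
    intro p
    rw [Equiv.Perm.mul_apply]
    by_cases e1 : (x p).val + 1 = c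
    · have := sTrans_up n c (x p) e1 h2
      rw [if_pos e1, if_neg (by omega)]; omega
    · by_cases e2 : (x p).val = c
      · have := sTrans_down n c (x p) e2 h1
        rw [if_neg e1, if_pos e2]; omega
      · rw [if_neg e1, if_neg e2, sTrans_fix n c _ e1 e2]; simp
  have tot : fs n S (sTrans n c * x) = fs n S x
      + ((S.filter fun p => (x p).val + 1 = c).card : ℤ)
      - ((S.filter fun p => (x p).val = c).card : ℤ) := by
    unfold fs
    rw [Finset.sum_congr rfl fun p _ => key p, Finset.sum_sub_distrib, Finset.sum_add_distrib]
    simp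
  have one : (S.filter fun p => (x p).val + 1 = c).card ≤ 1 := by
    rw [Finset.card_le_one]
    intro p hp q hq
    simp at hp hq
    apply x.injective
    apply Fin.ext
    omega
  refine ⟨by omega, fun e p hp => ?_⟩
  have z : (S.filter fun p => (x p).val = c).card = 0 := by omega
  rw [Finset.card_eq_zero, Finset.filter_eq_empty_iff] at z
  have := key p
  rw [if_neg (z hp)] at this
  split_ifs at this <;> omega

theorem fs_list (n : ℕ) (S : Finset (Fin n)) (x : Equiv.Perm (Fin n)) (L : List ℕ)
    (hL : ∀ i ∈ L, 1 ≤ i ∧ i ≤ n - 1) :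
    fs n S ((L.map (sTrans n)).prod * x) ≤ fs n S x + L.length ∧
    (fs n S ((L.map (sTrans n)).prod * x) = fs n S x + L.length →
      ∀ p ∈ S, (x p).val ≤ (((L.map (sTrans n)).prod * x) p).val) := by
  induction L with
  | nil => simp
  | cons c L ih =>
    obtain ⟨i1, i2⟩ := ih fun i hi => hL i (List.mem_cons_of_mem _ hi)
    have hc := hL c List.mem_cons_self
    obtain ⟨j1, j2⟩ := fs_step n S ((L.map (sTrans n)).prod * x) c hc.1 (by omega)
    simp only [List.map_cons, List.prod_cons, List.length_cons, mul_assoc]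
    push_cast
    refine ⟨by omega, fun e p hp => ?_⟩
    exact (i2 (by omega) p hp).trans (j2 (by omega) p hp)

theorem ext_props (n r i : ℕ) (a : ℕ → ℕ) (hi1 : 1 ≤ i) (hn : 1 ≤ n) (hrn : r ≤ n)
    (ha : ∀ j, i ≤ j → j ≤ r → j ≤ a j ∧ a j ≤ n - 1)
    (hainc : ∀ j, i ≤ j → j < r → a j < a (j + 1)) :
    (∀ j, 1 ≤ j → j ≤ r → j ≤ ext i a j + 1 ∧ ext i a j + 1 ≤ n) ∧
    (∀ j j', 1 ≤ j → j < j' → j' ≤ r → ext i a j < ext i a j') := by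
  constructor
  · intro j h1 h2
    unfold ext
    split_ifs with h
    · omega
    · have := ha j (by omega) h2; omega
  · intro j j' h1 h2
    induction j', h2 using Nat.le_induction with
    | base =>
      intro h3
      unfold ext
      split_ifs with h h' h'
      · omega
      · have := ha (j + 1) (by omega) h3; simp only [Nat.succ_eq_add_one] at *; omega
      · omega
      · exact hainc j (by omega) (by omega)
    | succ m hm ih =>
      intro h3
      refine (ih (by omega)).trans ?_
      unfold ext
      split_ifs with h h' h'
      · omega
      · have := ha (m + 1) (by omega) h3; omega
      · omega
      · exact hainc m (by omega) (by omega)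

theorem ext_sum (r i : ℕ) (a : ℕ → ℕ) (hi1 : 1 ≤ i)
    (ha : ∀ j, i ≤ j → j ≤ r → j ≤ a j) :
    ∑ j ∈ Finset.Icc i r, (a j - j + 1) = ∑ j ∈ Finset.Icc 1 r, (ext i a j + 1 - j) := by
  have : Finset.Icc i r ⊆ Finset.Icc 1 r := Finset.Icc_subset_Icc hi1 le_rfl
  rw [← Finset.sum_subset this]
  · apply Finset.sum_congr rfl
    intro j hj
    rw [Finset.mem_Icc] at hj
    have := ha j hj.1 hj.2
    rw [ext, if_neg (by omega)]; omega
  · intro j hj hj'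
    rw [Finset.mem_Icc] at hj hj'
    rw [ext, if_pos (by omega)]; omega

theorem fs_canon (n r : ℕ) (a : ℕ → ℕ) (hr : r ≤ n)
    (h1 : ∀ j, 1 ≤ j → j ≤ r → j ≤ a j + 1 ∧ a j + 1 ≤ n)
    (h2 : ∀ j j', 1 ≤ j → j < j' → j' ≤ r → a j < a j') :
    fs n (Finset.univ.filter fun p => p.val < r) (canonForm n 1 r a)
      = ∑ j ∈ Finset.Icc 1 r, (a j : ℤ) := by
  unfold fs
  refine Finset.sum_bij (fun p _ => p.val + 1) ?_ ?_ ?_ ?_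
  · intro p hp; simp at hp ⊢; omega
  · intro p _ q _ e; apply Fin.ext; simpa using e
  · intro j hj
    rw [Finset.mem_Icc] at hj
    exact ⟨⟨j - 1, by omega⟩, by simp; omega, by simp; omega⟩
  · intro p hp
    simp at hp
    rw [canon_val n a r h1 h2 p hp]

theorem canon_iff (n r : ℕ) (a b : ℕ → ℕ) (hr : r ≤ n)
    (a1 : ∀ j, 1 ≤ j → j ≤ r → j ≤ a j + 1 ∧ a j + 1 ≤ n)
    (a2 : ∀ j j', 1 ≤ j → j < j' → j' ≤ r → a j < a j')
    (b1 : ∀ j, 1 ≤ j → j ≤ r → j ≤ b j + 1 ∧ b j + 1 ≤ n)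
    (b2 : ∀ j j', 1 ≤ j → j < j' → j' ≤ r → b j < b j')
    (la : len n (canonForm n 1 r a) = ∑ j ∈ Finset.Icc 1 r, (a j + 1 - j))
    (lb : len n (canonForm n 1 r b) = ∑ j ∈ Finset.Icc 1 r, (b j + 1 - j)) :
    wle n (canonForm n 1 r a) (canonForm n 1 r b) ↔ ∀ j, 1 ≤ j → j ≤ r → a j ≤ b j := by
  constructor
  · intro h j hj hjr
    unfold wle at h
    have ca : ((∑ j ∈ Finset.Icc 1 r, (a j + 1 - j) : ℕ) : ℤ) =
        ∑ j ∈ Finset.Icc 1 r, (a j : ℤ) + ∑ j ∈ Finset.Icc 1 r, (1 - j : ℤ) := by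
      rw [← Finset.sum_add_distrib]; push_cast
      apply Finset.sum_congr rfl
      intro j hj
      rw [Finset.mem_Icc] at hj
      have := a1 j hj.1 hj.2
      omega
    have cb : ((∑ j ∈ Finset.Icc 1 r, (b j + 1 - j) : ℕ) : ℤ) =
        ∑ j ∈ Finset.Icc 1 r, (b j : ℤ) + ∑ j ∈ Finset.Icc 1 r, (1 - j : ℤ) := by
      rw [← Finset.sum_add_distrib]; push_cast
      apply Finset.sum_congr rfl
      intro j hj
      rw [Finset.mem_Icc] at hj
      have := b1 j hj.1 hj.2
      omega
    have fa := fs_canon n r a hr a1 a2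
    have fb := fs_canon n r b hr b1 b2
    have wd : ∃ m, HasWord n m (canonForm n 1 r b * (canonForm n 1 r a)⁻¹) := by
      obtain ⟨L, h1, h2, h3⟩ := canon_word n a r a1
      have : HasWord n L.length (canonForm n 1 r a)⁻¹ := by
        refine ⟨L.reverse, by simpa using h1, by simp, ?_⟩
        rw [← h3, List.prod_inv_reverse, List.map_map, List.map_reverse]
        congr 2
        apply List.map_congr_left
        intro c _
        simp only [Function.comp, sTrans]
        split_ifs <;> simp
      exact ⟨_, (canon_word n b r b1).mul this⟩
    obtain ⟨m, hm⟩ := wd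
    obtain ⟨L, h1, h2, h3⟩ := hm.lenw
    have := (fs_list n (Finset.univ.filter fun p => p.val < r) (canonForm n 1 r a) L h1).2
    rw [h3, inv_mul_cancel_right, h2] at this
    have := this (by omega) ⟨j - 1, by omega⟩ (by simp; omega)
    rw [canon_val n a r a1 a2 _ (by simp; omega), canon_val n b r b1 b2 _ (by simp; omega)] at this
    simpa [show j - 1 + 1 = j by omega] using this
  · intro h
    obtain ⟨u, hu, e⟩ := quot_word n a b r
      (fun j x y => ⟨(a1 j x y).1, (b1 j x y).2, h j x y⟩) a2
    have hq : canonForm n 1 r b * (canonForm n 1 r a)⁻¹ = u := by rw [e]; group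
    unfold wle
    rw [hq]
    have l1 := hu.len_le
    have l2 := (hu.lenw.mul (canon_word n a r a1)).len_le
    rw [← e] at l2
    have : ∑ j ∈ Finset.Icc 1 r, (b j + 1 - j) =
        ∑ j ∈ Finset.Icc 1 r, (b j - a j) + ∑ j ∈ Finset.Icc 1 r, (a j + 1 - j) := by
      rw [← Finset.sum_add_distrib]
      apply Finset.sum_congr rfl
      intro j hj
      rw [Finset.mem_Icc] at hj
      have := a1 j hj.1 hj.2
      have := h j hj.1 hj.2
      omega
    omega

/-- Let `2 ≤ r ≤ n−2` and let `w, τ ∈ W^{I_r}` be written in canonical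
form `w = (s_{a_i} ⋯ s_i) ⋯ (s_{a_r} ⋯ s_r)`, `τ = (s_{b_k} ⋯ s_k) ⋯ (s_{b_r} ⋯ s_r)`.
Then `w ≤ τ` if and only if `k ≤ i` and `b j ≥ a j` for all `i ≤ j ≤ r`. -/
theorem stmt11 (n r : ℕ) (hn : 4 ≤ n) (hr2 : 2 ≤ r) (hrn : r ≤ n - 2)
    (i k : ℕ) (a b : ℕ → ℕ)
    (hi1 : 1 ≤ i) (hir : i ≤ r)
    (ha : ∀ j, i ≤ j → j ≤ r → j ≤ a j ∧ a j ≤ n - 1)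
    (hainc : ∀ j, i ≤ j → j < r → a j < a (j + 1))
    (w : Equiv.Perm (Fin n)) (hwdef : w = canonForm n i r a) (hwI : w ∈ WIr n r)
    (hwlen : len n w = ∑ j ∈ Finset.Icc i r, (a j - j + 1))
    (hk1 : 1 ≤ k) (hkr : k ≤ r)
    (hb : ∀ j, k ≤ j → j ≤ r → j ≤ b j ∧ b j ≤ n - 1)
    (hbinc : ∀ j, k ≤ j → j < r → b j < b (j + 1))
    (τ : Equiv.Perm (Fin n)) (hτdef : τ = canonForm n k r b) (hτI : τ ∈ WIr n r)
    (hτlen : len n τ = ∑ j ∈ Finset.Icc k r, (b j - j + 1)) :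
    wle n w τ ↔ (k ≤ i ∧ ∀ j, i ≤ j → j ≤ r → a j ≤ b j) := by
  obtain ⟨a1, a2⟩ := ext_props n r i a hi1 (by omega) (by omega) ha hainc
  obtain ⟨b1, b2⟩ := ext_props n r k b hk1 (by omega) (by omega) hb hbinc
  rw [ext_sum r i a hi1 fun j x y => (ha j x y).1, hwdef, ← canon_ext n i a hi1] at hwlen
  rw [ext_sum r k b hk1 fun j x y => (hb j x y).1, hτdef, ← canon_ext n k b hk1] at hτlen
  rw [hwdef, hτdef, ← canon_ext n i a hi1, ← canon_ext n k b hk1,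
    canon_iff n r _ _ (by omega) a1 a2 b1 b2 hwlen hτlen]
  constructor
  · intro h
    have hki : k ≤ i := by
      by_contra hc
      have h1 := h i hi1 hir
      have h2 := ha i le_rfl hir
      rw [ext, ext, if_neg (by omega), if_pos (by omega)] at h1
      omega
    refine ⟨hki, fun j x y => ?_⟩
    have h1 := h j (by omega) y
    rwa [ext, ext, if_neg (by omega), if_neg (by omega)] at h1
  · rintro ⟨hki, h⟩ j x y
    by_cases hj : j < i
    · have := (b1 j x y).1
      rw [ext, if_pos hj]; omega
    · rw [ext, ext, if_neg hj, if_neg (by omega)]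
      exact h j (by omega) y

end SnPaper
end

section
/- Let 2 ≤ r ≤ n−2, write ω_r = Σ_{i=1}^{n−1} m_i α_i (with m_i = i(n−r)/n for i ≤ r and m_i = r(n−i)/n for r ≤ i ≤ n−1), and let τ_r be the unique element of W^{I_r} with τ_r(ω_r) = Σ_{i=1}^{n−1}(m_i − ⌈m_i⌉)α_i (⌈·⌉ the ceiling). Then τ_r(ω_r) ≤ 0, and for every w ∈ W^{I_r} with w(ω_r) ≤ 0 one has τ_r ≤ w; that is, τ_r is the unique minimal element (for the order ≤ on W) of the set {w ∈ W^{I_r} : w(ω_r) ≤ 0}. -/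
namespace SnPaper

/-- Partial sums of a vector. -/
noncomputable def pS (n : ℕ) (v : Fin n → ℝ) (k : ℕ) : ℝ :=
  ∑ j ∈ Finset.range k, if h : j < n then v ⟨j, h⟩ else 0

lemma pS_zero (n : ℕ) (v : Fin n → ℝ) : pS n v 0 = 0 := by simp [pS]

lemma pS_succ (n : ℕ) (v : Fin n → ℝ) (k : ℕ) (h : k < n) :
    pS n v (k + 1) = pS n v k + v ⟨k, h⟩ := by
  simp [pS, Finset.sum_range_succ, h]

lemma pS_add (n : ℕ) (v w : Fin n → ℝ) (k : ℕ) : pS n (v + w) k = pS n v k + pS n w k := by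
  unfold pS
  rw [← Finset.sum_add_distrib]
  refine Finset.sum_congr rfl fun j _ => ?_
  split_ifs <;> simp

lemma pS_smul (n : ℕ) (c : ℝ) (v : Fin n → ℝ) (k : ℕ) : pS n (c • v) k = c * pS n v k := by
  unfold pS
  rw [Finset.mul_sum]
  refine Finset.sum_congr rfl fun j _ => ?_
  split_ifs <;> simp

lemma pS_sub (n : ℕ) (v w : Fin n → ℝ) (k : ℕ) : pS n (v - w) k = pS n v k - pS n w k := by
  have := pS_add n (v - w) w k
  simp at this
  linarith

lemma pS_sum (n : ℕ) (s : Finset ℕ) (f : ℕ → Fin n → ℝ) (k : ℕ) :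
    pS n (∑ i ∈ s, f i) k = ∑ i ∈ s, pS n (f i) k := by
  classical
  induction s using Finset.induction_on with
  | empty => simp [pS]
  | insert a s ha ih => rw [Finset.sum_insert ha, Finset.sum_insert ha, pS_add, ih]

lemma pS_single (n : ℕ) (a : Fin n) (k : ℕ) (hk : k ≤ n) :
    pS n (Pi.single a 1) k = if a.val < k then 1 else 0 := by
  induction k with
  | zero => simp [pS]
  | succ k ih =>
    rw [pS_succ n _ k (by omega), ih (by omega)]
    by_cases h : a.val = k
    · subst h; simp
    · have h2 : (⟨k, by omega⟩ : Fin n) ≠ a := fun e => h (by rw [← e])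
      rw [Pi.single_eq_of_ne h2]
      have : a.val < k + 1 ↔ a.val < k := by omega
      simp [this]

lemma stdE_eq (n : ℕ) (a : Fin n) : stdE n (a.val + 1) = Pi.single a 1 := by
  have : 1 ≤ a.val + 1 ∧ a.val + 1 ≤ n := by omega
  unfold stdE
  rw [dif_pos this]
  congr

lemma pS_comb (n : ℕ) (c : ℕ → ℝ) (k : ℕ) (h1 : 1 ≤ k) (h2 : k ≤ n - 1) :
    pS n (∑ i ∈ Finset.Icc 1 (n - 1), c i • sroot n i) k = c k := by
  rw [pS_sum, Finset.sum_eq_single k]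
  · obtain ⟨j, rfl⟩ : ∃ j, k = j + 1 := ⟨k - 1, by omega⟩
    have e1 := stdE_eq n ⟨j, by omega⟩
    have e2 := stdE_eq n ⟨j + 1, by omega⟩
    simp only at e1 e2
    rw [pS_smul, sroot, pS_sub, e1, e2, pS_single _ _ _ (by omega), pS_single _ _ _ (by omega)]
    simp
  · intro b hb hbk
    rw [Finset.mem_Icc] at hb
    obtain ⟨j, rfl⟩ : ∃ j, b = j + 1 := ⟨b - 1, by omega⟩
    have e1 := stdE_eq n ⟨j, by omega⟩
    have e2 := stdE_eq n ⟨j + 1, by omega⟩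
    simp only at e1 e2
    rw [pS_smul, sroot, pS_sub, e1, e2, pS_single _ _ _ (by omega), pS_single _ _ _ (by omega)]
    have : j < k ↔ j + 1 < k := by omega
    simp [this]
  · intro h
    exact absurd (Finset.mem_Icc.mpr ⟨h1, h2⟩) h

lemma pS_comb_n (n : ℕ) (c : ℕ → ℝ) :
    pS n (∑ i ∈ Finset.Icc 1 (n - 1), c i • sroot n i) n = 0 := by
  rw [pS_sum]
  apply Finset.sum_eq_zero
  intro b hb
  rw [Finset.mem_Icc] at hb
  obtain ⟨j, rfl⟩ : ∃ j, b = j + 1 := ⟨b - 1, by omega⟩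
  have e1 := stdE_eq n ⟨j, by omega⟩
  have e2 := stdE_eq n ⟨j + 1, by omega⟩
  simp only at e1 e2
  rw [pS_smul, sroot, pS_sub, e1, e2, pS_single _ _ _ (by omega), pS_single _ _ _ (by omega)]
  have : j < n ∧ j + 1 < n := by omega
  simp [this]

lemma pS_nonneg (n : ℕ) (v : Fin n → ℝ) (hv : IsNonnegComb n v) (k : ℕ) (hk : k ≤ n) :
    0 ≤ pS n v k := by
  obtain ⟨c, hc, rfl⟩ := hv
  rcases Nat.eq_zero_or_pos k with rfl | h
  · rw [pS_zero]
  · rcases Nat.lt_or_ge (n - 1) k with h3 | h3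
    · have : k = n := by omega
      rw [this, pS_comb_n]
    · rw [pS_comb n c k h h3]; exact hc k

/-- Increasing on both blocks. -/
def Grass (n r : ℕ) (w : Equiv.Perm (Fin n)) : Prop :=
  ∀ i j : Fin n, i < j → (j.val < r ∨ r ≤ i.val) → w i < w j

lemma permAct_single (n : ℕ) (w : Equiv.Perm (Fin n)) (a : Fin n) :
    permAct n w (Pi.single a 1) = Pi.single (w a) 1 := by
  ext i
  simp [permAct, Pi.single_apply, Equiv.symm_apply_eq]

lemma grass_of_mem (n r : ℕ) (w : Equiv.Perm (Fin n)) (hw : w ∈ WIr n r) : Grass n r w := by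
  have step : ∀ a : ℕ, ∀ h : a + 1 < n, a + 1 ≠ r →
      w ⟨a, by omega⟩ < w ⟨a + 1, h⟩ := by
    intro a h har
    have := (hw (a + 1) (by omega) (by omega) har).1
    have e1 := stdE_eq n ⟨a, by omega⟩
    have e2 := stdE_eq n ⟨a + 1, h⟩
    simp only at e1 e2
    have e3 : permAct n w (sroot n (a + 1)) =
        Pi.single (w ⟨a, by omega⟩) 1 - Pi.single (w ⟨a + 1, h⟩) 1 := by
      rw [← permAct_single, ← permAct_single, sroot, e1, e2]
      rfl
    rw [e3] at this
    have h4 := pS_nonneg n _ this ((w ⟨a + 1, h⟩).val + 1) (by omega)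
    rw [pS_sub, pS_single _ _ _ (by omega), pS_single _ _ _ (by omega)] at h4
    have hne : w ⟨a, by omega⟩ ≠ w ⟨a + 1, h⟩ := by
      intro e
      have := w.injective e
      simp at this
    by_contra hlt
    have hgt : w ⟨a + 1, h⟩ < w ⟨a, by omega⟩ := lt_of_le_of_ne (not_lt.mp hlt) (Ne.symm hne)
    have hv : (w ⟨a + 1, h⟩).val < (w ⟨a, by omega⟩).val := hgt
    have : ¬ (w ⟨a, by omega⟩).val < (w ⟨a + 1, h⟩).val + 1 := by omega
    rw [if_neg this] at h4
    norm_num at h4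
  have key : ∀ d a : ℕ, ∀ h : a + d + 1 < n, (a + d + 1 < r ∨ r ≤ a) →
      w ⟨a, by omega⟩ < w ⟨a + d + 1, h⟩ := by
    intro d
    induction d with
    | zero => intro a h h2; exact step a h (by omega)
    | succ d ih =>
      intro a h h2
      exact lt_trans (ih a (by omega) (by omega)) (step (a + d + 1) (by omega) (by omega))
  intro i j hij h
  have hij' : i.val < j.val := hij
  have := key (j.val - i.val - 1) i.val (by omega) (by omega)
  convert this using 2
  apply Fin.ext
  simp
  omega

/-- Number of values below `k` on the first block. -/
def cnt (n r : ℕ) (w : Equiv.Perm (Fin n)) (k : ℕ) : ℕ :=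
  (Finset.univ.filter fun i : Fin n => i.val < r ∧ (w i).val < k).card

lemma cnt_zero (n r : ℕ) (w : Equiv.Perm (Fin n)) : cnt n r w 0 = 0 := by simp [cnt]

lemma cnt_succ (n r : ℕ) (w : Equiv.Perm (Fin n)) (k : ℕ) (hk : k < n) :
    cnt n r w (k + 1) = cnt n r w k + if (w.symm ⟨k, hk⟩).val < r then 1 else 0 := by
  unfold cnt
  split_ifs with h
  · have : (Finset.univ.filter fun i : Fin n => i.val < r ∧ (w i).val < k + 1) =
        insert (w.symm ⟨k, hk⟩) (Finset.univ.filter fun i : Fin n => i.val < r ∧ (w i).val < k) := by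
      ext i
      simp only [Finset.mem_filter, Finset.mem_univ, true_and, Finset.mem_insert,
        Equiv.eq_symm_apply, Fin.ext_iff]
      constructor
      · rintro ⟨h1, h2⟩
        by_cases e : (w i).val = k
        · exact Or.inl e
        · exact Or.inr ⟨h1, by omega⟩
      · rintro (h1 | h1)
        · have : i = w.symm ⟨k, hk⟩ := by rw [Equiv.eq_symm_apply]; exact Fin.ext h1
          rw [this]; simp [h]
        · exact ⟨h1.1, by omega⟩
    rw [this, Finset.card_insert_of_notMem (by simp)]
  · refine Eq.trans (congrArg Finset.card ?_) (Nat.add_zero _).symm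
    ext i
    simp only [Finset.mem_filter, Finset.mem_univ, true_and]
    constructor
    · rintro ⟨h1, h2⟩
      refine ⟨h1, ?_⟩
      by_contra h3
      have : i = w.symm ⟨k, hk⟩ := by
        rw [Equiv.eq_symm_apply]; apply Fin.ext; simp only; omega
      rw [this] at h1; exact h h1
    · rintro ⟨h1, h2⟩; exact ⟨h1, by omega⟩

lemma cnt_n (n r : ℕ) (w : Equiv.Perm (Fin n)) : cnt n r w n = cnt n r 1 n := by
  simp [cnt]

lemma cnt_one (n r : ℕ) (k : ℕ) (hk : k ≤ n) : cnt n r 1 k = min k r := by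
  induction k with
  | zero => simp [cnt]
  | succ k ih =>
    rw [cnt_succ n r 1 k (by omega), ih (by omega)]
    have : ((1 : Equiv.Perm (Fin n)).symm ⟨k, by omega⟩).val = k := rfl
    rw [this]
    split_ifs <;> omega

lemma cnt_le_one (n r : ℕ) (w : Equiv.Perm (Fin n)) (k : ℕ) (hk : k ≤ n) :
    cnt n r w k ≤ cnt n r 1 k := by
  rw [cnt_one n r k hk]
  apply le_min
  · induction k with
    | zero => simp [cnt]
    | succ k ih =>
      rw [cnt_succ n r w k (by omega)]
      have := ih (by omega)
      split_ifs <;> omega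
  · have h1 : cnt n r w k ≤ cnt n r w n := by
      unfold cnt
      apply Finset.card_le_card
      intro i
      simp only [Finset.mem_filter, Finset.mem_univ, true_and]
      rintro ⟨h1, h2⟩; exact ⟨h1, by omega⟩
    rw [cnt_n, cnt_one n r n le_rfl] at h1
    omega

lemma eq_of_cnt (n r : ℕ) (w t : Equiv.Perm (Fin n)) (hw : Grass n r w) (ht : Grass n r t)
    (h : ∀ k ≤ n, cnt n r w k = cnt n r t k) : w = t := by
  have hb : ∀ k : Fin n, (w.symm k).val < r ↔ (t.symm k).val < r := by
    intro k
    have h1 := cnt_succ n r w k.val k.isLt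
    have h2 := cnt_succ n r t k.val k.isLt
    rw [h _ (by omega), h _ (by omega)] at h1
    rw [h1] at h2
    simp only [Fin.eta] at h2
    split_ifs at h2 with a b b <;> omega
  have hu : StrictMono (fun i => t.symm (w i)) := by
    intro i j hij
    have hi := hb (w i)
    have hj := hb (w j)
    simp only [Equiv.symm_apply_apply] at hi hj
    have hij' : i.val < j.val := hij
    by_cases hc : j.val < r ∨ r ≤ i.val
    · have h1 := hw i j hij hc
      by_contra hn
      simp only [not_lt] at hn
      rcases eq_or_lt_of_le hn with e | e
      · have := w.injective (t.symm.injective e)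
        omega
      · have h2 := ht _ _ e (by
          rcases hc with hc | hc
          · left; omega
          · right; have := hj.not; omega)
        simp only [Equiv.apply_symm_apply] at h2
        exact absurd h1 (not_lt.mpr h2.le)
    · change (t.symm (w i)).val < (t.symm (w j)).val
      push Not at hc
      have := hi.1 hc.2
      have := hj.not.1 (by omega)
      omega
  have hid : (fun i => t.symm (w i)) = id := by
    have hsub := Subsingleton.elim (hu.orderIsoOfSurjective _ (w.trans t.symm).surjective)
      (OrderIso.refl (Fin n))
    funext i
    exact congrArg (fun e : Fin n ≃o Fin n => e i) hsub
  ext i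
  have := congrFun hid i
  simp only [id, Equiv.symm_apply_eq] at this
  rw [this]

lemma sTrans_val (n k : ℕ) (h1 : 1 ≤ k) (h2 : k ≤ n - 1) (x : Fin n) :
    (sTrans n k x).val = if x.val = k then k - 1 else if x.val = k - 1 then k else x.val := by
  have : 1 ≤ k ∧ k + 1 ≤ n := by omega
  unfold sTrans
  rw [dif_pos this, Equiv.swap_apply_def]
  simp only [Fin.ext_iff]
  split_ifs <;> simp <;> omega

lemma cnt_sTrans_ne (n r k : ℕ) (h1 : 1 ≤ k) (h2 : k ≤ n - 1) (w : Equiv.Perm (Fin n)) (j : ℕ)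
    (hj : j ≠ k) : cnt n r (sTrans n k * w) j = cnt n r w j := by
  unfold cnt
  refine congrArg Finset.card ?_
  ext i
  simp only [Finset.mem_filter, Finset.mem_univ, true_and, Equiv.Perm.mul_apply,
    sTrans_val n k h1 h2]
  split_ifs <;> omega

lemma cnt_sTrans_le (n r k : ℕ) (h1 : 1 ≤ k) (h2 : k ≤ n - 1) (w : Equiv.Perm (Fin n)) :
    cnt n r w k ≤ cnt n r (sTrans n k * w) k + 1 := by
  unfold cnt
  have hk : k - 1 < n := by omega
  refine le_trans (Finset.card_le_card (t := insert (w.symm ⟨k - 1, hk⟩)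
    (Finset.univ.filter fun i : Fin n => i.val < r ∧ ((sTrans n k * w) i).val < k)) ?_)
    (Finset.card_insert_le _ _)
  intro i
  simp only [Finset.mem_filter, Finset.mem_univ, true_and, Equiv.Perm.mul_apply,
    sTrans_val n k h1 h2, Finset.mem_insert, Equiv.eq_symm_apply, Fin.ext_iff]
  split_ifs <;> omega

/-- Total of the counts. -/
def tot (n r : ℕ) (w : Equiv.Perm (Fin n)) : ℕ := ∑ k ∈ Finset.range (n + 1), cnt n r w k

lemma tot_le (n r : ℕ) (L : List ℕ) (hL : ∀ i ∈ L, 1 ≤ i ∧ i ≤ n - 1) :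
    tot n r 1 ≤ tot n r (L.map (sTrans n)).prod + L.length := by
  induction L with
  | nil => simp
  | cons k L ih =>
    have ih := ih (fun i hi => hL i (List.mem_cons_of_mem _ hi))
    obtain ⟨h1, h2⟩ := hL k List.mem_cons_self
    simp only [List.map_cons, List.prod_cons, List.length_cons]
    set u := (L.map (sTrans n)).prod
    have hk : k ∈ Finset.range (n + 1) := by simp; omega
    have ee : ∀ f : ℕ → ℕ, (Finset.range (n + 1)).sum f =
        f k + ((Finset.range (n + 1)).erase k).sum f :=
      fun f => (Finset.add_sum_erase _ f hk).symm
    have : tot n r u ≤ tot n r (sTrans n k * u) + 1 := by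
      unfold tot
      have hs : ((Finset.range (n + 1)).erase k).sum (cnt n r u) =
          ((Finset.range (n + 1)).erase k).sum (cnt n r (sTrans n k * u)) :=
        Finset.sum_congr rfl (fun j hj =>
          (cnt_sTrans_ne n r k h1 h2 u j (Finset.ne_of_mem_erase hj)).symm)
      have e1 := ee (cnt n r u)
      have e2 := ee (cnt n r (sTrans n k * u))
      rw [hs] at e1
      change (Finset.range (n + 1)).sum (cnt n r u) ≤
        (Finset.range (n + 1)).sum (cnt n r (sTrans n k * u)) + 1
      rw [e1, e2]
      have := cnt_sTrans_le n r k h1 h2 u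
      omega
    omega

lemma grass_sTrans (n r k : ℕ) (h1 : 1 ≤ k) (h2 : k ≤ n - 1) (w : Equiv.Perm (Fin n))
    (hw : Grass n r w) (ha : ¬ (w.symm ⟨k - 1, by omega⟩).val < r)
    (hb : (w.symm ⟨k, by omega⟩).val < r) : Grass n r (sTrans n k * w) := by
  intro i j hij h
  have h3 : (w i).val < (w j).val := hw i j hij h
  have hij' : i.val < j.val := hij
  change ((sTrans n k * w) i).val < ((sTrans n k * w) j).val
  have hnot : ¬ ((w i).val = k - 1 ∧ (w j).val = k) := by
    rintro ⟨e1, e2⟩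
    have e1' : w.symm ⟨k - 1, by omega⟩ = i := by
      rw [Equiv.symm_apply_eq]; exact Fin.ext e1.symm
    have e2' : w.symm ⟨k, by omega⟩ = j := by
      rw [Equiv.symm_apply_eq]; exact Fin.ext e2.symm
    rw [e1'] at ha
    rw [e2'] at hb
    omega
  rw [Equiv.Perm.mul_apply, Equiv.Perm.mul_apply, sTrans_val n k h1 h2, sTrans_val n k h1 h2]
  split_ifs <;> omega

lemma sTrans_sq (n k : ℕ) : sTrans n k * sTrans n k = 1 := by
  unfold sTrans
  split_ifs <;> simp

lemma exists_word (n r : ℕ) (t : Equiv.Perm (Fin n)) (ht : Grass n r t) :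
    ∀ (d : ℕ) (w : Equiv.Perm (Fin n)), Grass n r w → (∀ k ≤ n, cnt n r w k ≤ cnt n r t k) →
      tot n r w + d = tot n r t →
      ∃ L : List ℕ, (∀ i ∈ L, 1 ≤ i ∧ i ≤ n - 1) ∧ L.length = d ∧
        (L.map (sTrans n)).prod = w * t⁻¹ := by
  intro d
  induction d with
  | zero =>
    intro w hw hle htot
    have : w = t := by
      apply eq_of_cnt n r w t hw ht
      intro k hk
      have := (Finset.sum_eq_sum_iff_of_le (s := Finset.range (n + 1)) (f := cnt n r w)
        (g := cnt n r t) (fun i hi => hle i (by simp at hi; omega))).1 htot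
      exact this k (by simp; omega)
    exact ⟨[], by simp, rfl, by simp [this]⟩
  | succ d ih =>
    intro w hw hle htot
    have hex : ((Finset.range (n + 1)).filter fun k => cnt n r w k < cnt n r t k).Nonempty := by
      by_contra hne
      rw [Finset.not_nonempty_iff_eq_empty, Finset.filter_eq_empty_iff] at hne
      have : tot n r t ≤ tot n r w := Finset.sum_le_sum fun i hi => not_lt.1 (hne hi)
      omega
    obtain ⟨k, hk, hmax⟩ := Finset.exists_max_image _
      (fun k : ℕ => (k : ℤ) - 2 * (cnt n r w k : ℤ)) hex
    simp only [Finset.mem_filter, Finset.mem_range] at hk hmax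
    obtain ⟨hkn, hlt⟩ := hk
    have h1 : 1 ≤ k := by
      rcases Nat.eq_zero_or_pos k with rfl | h
      · simp [cnt_zero] at hlt
      · exact h
    have h2 : k ≤ n - 1 := by
      have : k ≠ n := by
        rintro rfl
        rw [cnt_n k r w, cnt_n k r t] at hlt
        omega
      omega
    have sw := cnt_succ n r w k (by omega)
    have st := cnt_succ n r t k (by omega)
    have pw := cnt_succ n r w (k - 1) (by omega)
    have pt := cnt_succ n r t (k - 1) (by omega)
    rw [Nat.sub_add_cancel h1] at pw pt
    have ha : ¬ (w.symm ⟨k - 1, by omega⟩).val < r := by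
      intro h
      rw [if_pos h] at pw
      have : cnt n r t k ≤ cnt n r t (k - 1) + 1 := by rw [pt]; split_ifs <;> omega
      have := hmax (k - 1) ⟨by omega, by omega⟩
      omega
    have hb : (w.symm ⟨k, by omega⟩).val < r := by
      by_contra h
      rw [if_neg h] at sw
      have := hmax (k + 1) ⟨by omega, by omega⟩
      omega
    rw [if_neg ha] at pw
    rw [if_pos hb] at sw
    have hg := grass_sTrans n r k h1 h2 w hw ha hb
    have hne := cnt_sTrans_ne n r k h1 h2 w
    have hke : cnt n r (sTrans n k * w) k = cnt n r w k + 1 := by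
      have e := cnt_succ n r (sTrans n k * w) (k - 1) (by omega)
      rw [Nat.sub_add_cancel h1, hne (k - 1) (by omega)] at e
      have : (sTrans n k * w).symm ⟨k - 1, by omega⟩ = w.symm ⟨k, by omega⟩ := by
        rw [Equiv.symm_apply_eq, Equiv.Perm.mul_apply, Equiv.apply_symm_apply]
        apply Fin.ext
        rw [sTrans_val n k h1 h2]
        simp
      rw [this, if_pos hb] at e
      omega
    have htot' : tot n r (sTrans n k * w) = tot n r w + 1 := by
      have hk : k ∈ Finset.range (n + 1) := by simp; omega
      unfold tot
      have hs : ((Finset.range (n + 1)).erase k).sum (cnt n r (sTrans n k * w)) =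
          ((Finset.range (n + 1)).erase k).sum (cnt n r w) :=
        Finset.sum_congr rfl (fun j hj => hne j (Finset.ne_of_mem_erase hj))
      have ee : ∀ f : ℕ → ℕ, (Finset.range (n + 1)).sum f =
          f k + ((Finset.range (n + 1)).erase k).sum f :=
        fun f => (Finset.add_sum_erase _ f hk).symm
      have e1 := ee (cnt n r w)
      have e2 := ee (cnt n r (sTrans n k * w))
      rw [hs] at e2
      change (Finset.range (n + 1)).sum (cnt n r (sTrans n k * w)) =
        (Finset.range (n + 1)).sum (cnt n r w) + 1
      rw [e1, e2]
      omega
    obtain ⟨L, hL, hlen, hprod⟩ := ih (sTrans n k * w) hg (by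
      intro j hj
      by_cases e : j = k
      · rw [e, hke]; omega
      · rw [hne j e]; exact hle j hj) (by omega)
    refine ⟨k :: L, ?_, by simp [hlen], ?_⟩
    · intro i hi
      rcases List.mem_cons.1 hi with rfl | hi
      · exact ⟨h1, h2⟩
      · exact hL i hi
    · rw [List.map_cons, List.prod_cons, hprod, ← mul_assoc, ← mul_assoc, sTrans_sq, one_mul]

lemma grass_one (n r : ℕ) : Grass n r 1 := fun _ _ h _ => h

lemma tot_mono (n r : ℕ) (w t : Equiv.Perm (Fin n)) (h : ∀ k ≤ n, cnt n r w k ≤ cnt n r t k) :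
    tot n r w ≤ tot n r t :=
  Finset.sum_le_sum fun i hi => h i (by simp at hi; omega)

lemma len_grass (n r : ℕ) (w : Equiv.Perm (Fin n)) (hw : Grass n r w) :
    tot n r w + len n w = tot n r 1 := by
  have hm := tot_mono n r w 1 (fun k hk => cnt_le_one n r w k hk)
  obtain ⟨L, hL, hlen, hprod⟩ := exists_word n r 1 (grass_one n r) (tot n r 1 - tot n r w) w hw
    (fun k hk => cnt_le_one n r w k hk) (by omega)
  rw [inv_one, mul_one] at hprod
  have hmem : L.length ∈ {k | ∃ L : List ℕ, (∀ i ∈ L, 1 ≤ i ∧ i ≤ n - 1) ∧ L.length = k ∧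
    (L.map (sTrans n)).prod = w} := ⟨L, hL, rfl, hprod⟩
  have hle : len n w ≤ L.length := Nat.sInf_le hmem
  obtain ⟨L', hL', hlen', hprod'⟩ := Nat.sInf_mem ⟨_, hmem⟩
  change L'.length = len n w at hlen'
  have := tot_le n r L' hL'
  rw [hprod'] at this
  omega

lemma wle_of_cnt (n r : ℕ) (t w : Equiv.Perm (Fin n)) (ht : Grass n r t) (hw : Grass n r w)
    (h : ∀ k ≤ n, cnt n r w k ≤ cnt n r t k) : wle n t w := by
  have hm := tot_mono n r w t h
  obtain ⟨L, hL, hlen, hprod⟩ := exists_word n r t ht (tot n r t - tot n r w) w hw h (by omega)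
  have hmem : L.length ∈ {k | ∃ L : List ℕ, (∀ i ∈ L, 1 ≤ i ∧ i ≤ n - 1) ∧ L.length = k ∧
    (L.map (sTrans n)).prod = w * t⁻¹} := ⟨L, hL, rfl, hprod⟩
  have hle : len n (w * t⁻¹) ≤ L.length := Nat.sInf_le hmem
  obtain ⟨L1, hL1, hlen1, hprod1⟩ := Nat.sInf_mem ⟨_, hmem⟩
  change L1.length = len n (w * t⁻¹) at hlen1
  have e1 := len_grass n r t ht
  have e2 := len_grass n r w hw
  have hm2 := tot_mono n r t 1 (fun k hk => cnt_le_one n r t k hk)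
  obtain ⟨L2, hL2, hlen2, hprod2⟩ := exists_word n r 1 (grass_one n r) (tot n r 1 - tot n r t) t ht
    (fun k hk => cnt_le_one n r t k hk) (by omega)
  rw [inv_one, mul_one] at hprod2
  have hw2 : len n w ≤ (L1 ++ L2).length := by
    apply Nat.sInf_le
    refine ⟨L1 ++ L2, ?_, rfl, ?_⟩
    · intro i hi
      rcases List.mem_append.1 hi with hi | hi
      · exact hL1 i hi
      · exact hL2 i hi
    · rw [List.map_append, List.prod_append, hprod1, hprod2]
      simp
  rw [List.length_append] at hw2
  unfold wle
  omega

lemma pS_fund (n r : ℕ) (hr : r ≤ n) (w : Equiv.Perm (Fin n)) (k : ℕ) (hk : k ≤ n) :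
    pS n (permAct n w (fundWeight n r)) k = (cnt n r w k : ℝ) - (r : ℝ) / n * k := by
  have aux : ∀ s ≤ n, ∀ i : Fin n,
      (∑ j ∈ Finset.Icc 1 s, stdE n j) i = if i.val < s then 1 else 0 := by
    intro s hs i
    induction s with
    | zero => simp
    | succ s ih =>
      rw [Finset.sum_Icc_succ_top (by omega), Pi.add_apply, ih (by omega)]
      have e := stdE_eq n ⟨s, by omega⟩
      simp only at e
      rw [e, Pi.single_apply]
      simp only [Fin.ext_iff]
      split_ifs <;> first | omega | simp
  have hf : ∀ i : Fin n, fundWeight n r i = (if i.val < r then 1 else 0) - (r : ℝ) / n := by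
    intro i
    unfold fundWeight
    rw [Pi.sub_apply, Pi.smul_apply, aux r hr, aux n le_rfl]
    simp
  induction k with
  | zero => simp [pS_zero, cnt_zero]
  | succ k ih =>
    rw [pS_succ n _ k (by omega), ih (by omega), cnt_succ n r w k (by omega)]
    simp only [permAct, Function.comp_apply, hf]
    split_ifs <;> push_cast <;> ring

/-- Let `2 ≤ r ≤ n−2` and `τ_r` the unique element of `W^{I_r}` with
`τ_r(ω_r) = ∑ (m i − ⌈m i⌉) • α i`.  Then `τ_r(ω_r) ≤ 0`, and `τ_r ≤ w` for every
`w ∈ W^{I_r}` with `w(ω_r) ≤ 0`; that is, `τ_r` is the unique minimal element of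
`{w ∈ W^{I_r} : w(ω_r) ≤ 0}`. -/
theorem stmt13 (n r : ℕ) (hn : 4 ≤ n) (hr2 : 2 ≤ r) (hrn : r ≤ n - 2)
    (m : ℕ → ℚ)
    (hm : ∀ i, m i = if i ≤ r then ((i : ℚ) * ((n : ℚ) - (r : ℚ))) / (n : ℚ)
      else ((r : ℚ) * ((n : ℚ) - (i : ℚ))) / (n : ℚ))
    (hωdecomp : fundWeight n r = ∑ i ∈ Finset.Icc 1 (n - 1), ((m i : ℝ)) • sroot n i)
    (τr : Equiv.Perm (Fin n)) (hτI : τr ∈ WIr n r)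
    (hτω : permAct n τr (fundWeight n r) =
      ∑ i ∈ Finset.Icc 1 (n - 1), ((m i : ℝ) - ((⌈m i⌉ : ℤ) : ℝ)) • sroot n i) :
    vle n (permAct n τr (fundWeight n r)) 0 ∧
      (∀ w ∈ WIr n r, vle n (permAct n w (fundWeight n r)) 0 → wle n τr w) ∧
      (∀ w ∈ WIr n r, vle n (permAct n w (fundWeight n r)) 0 →
        (∀ w' ∈ WIr n r, vle n (permAct n w' (fundWeight n r)) 0 → wle n w w') →
        w = τr) := by
  have hτ0 : vle n (permAct n τr (fundWeight n r)) 0 := by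
    refine ⟨fun i => ((⌈m i⌉ : ℤ) : ℝ) - (m i : ℝ), ?_, ?_⟩
    · intro i
      have : (m i : ℝ) ≤ ((⌈m i⌉ : ℤ) : ℝ) := by exact_mod_cast Int.le_ceil (m i)
      simpa using this
    · rw [hτω, zero_sub, ← Finset.sum_neg_distrib]
      refine Finset.sum_congr rfl fun i _ => ?_
      rw [← neg_smul, neg_sub]
  have hτG := grass_of_mem n r τr hτI
  have hcnt : ∀ w, vle n (permAct n w (fundWeight n r)) 0 →
      ∀ k ≤ n, cnt n r w k ≤ cnt n r τr k := by
    intro w hw k hk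
    rcases Nat.eq_zero_or_pos k with rfl | h1
    · simp [cnt_zero]
    rcases Nat.lt_or_ge (n - 1) k with h3 | h3
    · have : k = n := by omega
      rw [this, cnt_n n r w, cnt_n n r τr]
    have a := pS_nonneg n _ hw k hk
    rw [pS_sub, pS_fund n r (by omega) w k hk] at a
    have z : pS n 0 k = 0 := by simp [pS]
    rw [z] at a
    have b := pS_fund n r (by omega) τr k hk
    rw [hτω, pS_comb n _ k h1 h3] at b
    have c : ((⌈m k⌉ : ℤ) : ℝ) < (m k : ℝ) + 1 := by exact_mod_cast Int.ceil_lt_add_one (m k)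
    have : (cnt n r w k : ℝ) < (cnt n r τr k : ℝ) + 1 := by linarith
    have : cnt n r w k < cnt n r τr k + 1 := by exact_mod_cast this
    omega
  have hmain : ∀ w ∈ WIr n r, vle n (permAct n w (fundWeight n r)) 0 → wle n τr w :=
    fun w hw hv => wle_of_cnt n r τr w hτG (grass_of_mem n r w hw) (hcnt w hv)
  refine ⟨hτ0, hmain, ?_⟩
  intro w hw hv hmin
  have h1 := hmin τr hτI hτ0
  have h2 := hmain w hw hv
  have hG := grass_of_mem n r w hw
  unfold wle at h1 h2
  have e1 := len_grass n r w hG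
  have e2 := len_grass n r τr hτG
  have htot : tot n r w = tot n r τr := by omega
  apply eq_of_cnt n r w τr hG hτG
  intro k hk
  have := (Finset.sum_eq_sum_iff_of_le (s := Finset.range (n + 1)) (f := cnt n r w)
    (g := cnt n r τr) (fun i hi => hcnt w hv i (by simp at hi; omega))).1 htot
  exact this k (by simp; omega)

end SnPaper
end

section
/- Let χ = Σ_{i=1}^n m_i α_i, where the m_i are positive integers with m_1 < m_2 < ⋯ < m_n, and assume χ is regular dominant, i.e. the coordinates of χ = (χ_1, …, χ_{n+1}) ∈ ℝ^{n+1} satisfy χ_1 > χ_2 > ⋯ > χ_{n+1}. Then for w ∈ W = S_{n+1}: w(χ) ≤ 0 if and only if w = s_1·s_2⋯s_n·τ for some τ ∈ W_I. -/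
namespace SnPaper

lemma sTrans_succ (N i : ℕ) (h : i + 1 < N) :
    sTrans N (i + 1) = Equiv.swap (⟨i, by omega⟩ : Fin N) (⟨i + 1, h⟩ : Fin N) := by
  unfold sTrans
  rw [dif_pos ⟨by omega, by omega⟩]
  rfl

lemma stdE_apply (N j : ℕ) (k : Fin N) : stdE N j k = if j = k.val + 1 then 1 else 0 := by
  unfold stdE
  have := k.2
  split_ifs with h h' h'
  · subst h'; simp
  · rw [Pi.single_apply, if_neg]
    intro hk
    apply h'
    rw [hk]; simp; omega
  · omega
  · rfl

lemma comb_apply (n : ℕ) (c : ℕ → ℝ) (h0 : c 0 = 0) (h1 : c (n + 1) = 0) (k : Fin (n + 1)) :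
    (∑ i ∈ Finset.Icc 1 n, c i • sroot (n + 1) i) k = c (k.val + 1) - c k.val := by
  have hk := k.2
  simp only [Finset.sum_apply, Pi.smul_apply, sroot, Pi.sub_apply, stdE_apply, smul_eq_mul,
    mul_sub, Finset.sum_sub_distrib, mul_ite, mul_one, mul_zero, add_left_inj, Finset.sum_ite_eq',
    Finset.mem_Icc]
  congr 1
  · split_ifs with h
    · rfl
    · have : k.val = n := by omega
      rw [this, h1]
  · split_ifs with h
    · rfl
    · have : k.val = 0 := by omega
      rw [this, h0]

lemma prod_last (n : ℕ) (k : ℕ) (hk : k ≤ n) :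
    ((List.range' 1 k).map (sTrans (n + 1))).prod ⟨k, by omega⟩ = 0 := by
  induction k with
  | zero => simp
  | succ k ih =>
    rw [List.range'_1_concat, List.map_append, List.prod_append]
    simp only [List.map_cons, List.map_nil, List.prod_cons, List.prod_nil, mul_one,
      Equiv.Perm.mul_apply]
    rw [add_comm 1 k, sTrans_succ _ _ (by omega), Equiv.swap_apply_right]
    exact ih (by omega)

lemma closure_fix (n : ℕ) (τ : Equiv.Perm (Fin (n + 1))) :
    τ ∈ Subgroup.closure {g : Equiv.Perm (Fin (n + 1)) |
          ∃ i, 1 ≤ i ∧ i ≤ n - 1 ∧ g = sTrans (n + 1) i} ↔ τ (Fin.last n) = Fin.last n := by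
  constructor
  · intro h
    have : Subgroup.closure {g : Equiv.Perm (Fin (n + 1)) |
          ∃ i, 1 ≤ i ∧ i ≤ n - 1 ∧ g = sTrans (n + 1) i} ≤
        MulAction.stabilizer (Equiv.Perm (Fin (n + 1))) (Fin.last n) := by
      rw [Subgroup.closure_le]
      rintro g ⟨i, h1, h2, rfl⟩
      obtain ⟨j, rfl⟩ : ∃ j, i = j + 1 := ⟨i - 1, by omega⟩
      rw [sTrans_succ _ _ (by omega)]
      simp only [SetLike.mem_coe, MulAction.mem_stabilizer_iff, Equiv.Perm.smul_def]
      apply Equiv.swap_apply_of_ne_of_ne <;> simp only [ne_eq, Fin.ext_iff, Fin.val_last] <;> omega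
    exact this h
  · intro h
    rcases n with _ | n
    · have : τ = 1 := Equiv.ext fun x => by
        apply Fin.ext
        have := (τ x).2
        have := x.2
        rw [Equiv.Perm.one_apply]; omega
      rw [this]; exact one_mem _
    let e : Fin (n + 1) ≃ {x : Fin (n + 2) // x ≠ Fin.last (n + 1)} := finSuccAboveEquiv (Fin.last (n + 1))
    have he : ∀ i, (e i : Fin (n + 2)) = i.castSucc := by intro i; exact Fin.succAbove_last_apply i
    have hp : ∀ x, τ x ≠ Fin.last (n + 1) ↔ x ≠ Fin.last (n + 1) := by
      intro x
      rw [not_iff_not]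
      constructor
      · intro hx; exact τ.injective (hx.trans h.symm)
      · rintro rfl; exact h
    let σ : Equiv.Perm (Fin (n + 1)) := e.permCongr.symm (τ.subtypePerm hp)
    have hτ : τ = Equiv.Perm.extendDomainHom e σ := by
      rw [Equiv.Perm.extendDomainHom_apply]
      ext x
      by_cases hx : x = Fin.last (n + 1)
      · rw [Equiv.Perm.extendDomain_apply_not_subtype (p := fun x => x ≠ Fin.last (n + 1)) _ _ (not_not.mpr hx), hx, h]
      · rw [Equiv.Perm.extendDomain_apply_subtype (p := fun x => x ≠ Fin.last (n + 1)) _ _ hx]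
        simp [σ]
    rw [hτ]
    clear_value σ
    clear hτ
    have hσ : σ ∈ Submonoid.closure (Set.range fun i : Fin n => Equiv.swap i.castSucc i.succ) := by
      rw [Equiv.Perm.mclosure_swap_castSucc_succ]; trivial
    induction hσ using Submonoid.closure_induction with
    | one => rw [map_one]; exact one_mem _
    | mul a b _ _ ha hb => rw [map_mul]; exact mul_mem ha hb
    | mem a ha =>
      obtain ⟨i, rfl⟩ := ha
      apply Subgroup.subset_closure
      have hi := i.2
      refine ⟨i.val + 1, by omega, by omega, ?_⟩
      rw [sTrans_succ _ _ (by omega), Equiv.Perm.extendDomainHom_apply]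
      apply Equiv.ext
      intro x
      by_cases hx : x = Fin.last (n + 1)
      · rw [Equiv.Perm.extendDomain_apply_not_subtype (p := fun x => x ≠ Fin.last (n + 1)) _ _ (not_not.mpr hx), hx,
          Equiv.swap_apply_of_ne_of_ne] <;>
          simp only [ne_eq, Fin.ext_iff, Fin.val_last] <;> omega
      · obtain ⟨y, hy⟩ := e.surjective ⟨x, hx⟩
        have hxy : x = e y := by rw [hy]
        rw [hxy, Equiv.Perm.extendDomain_apply_image, he, he]
        simp only [Equiv.swap_apply_def, Fin.ext_iff, Fin.val_castSucc, Fin.val_succ]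
        split_ifs <;> simp_all

/-- In `W = S_{n+1}` acting on `ℝ^{n+1}`: let
`χ = ∑_{i=1}^n m i • α i` with positive integers `m 1 < m 2 < ⋯ < m n`, regular dominant
(strictly decreasing coordinates).  Then for `w ∈ W`: `w(χ) ≤ 0` if and only if
`w = s_1 · s_2 ⋯ s_n · τ` for some `τ ∈ W_I`, where `W_I` is the subgroup generated by
`s_1, …, s_{n−1}`. -/
theorem stmt16 (n : ℕ) (hn : 2 ≤ n) (m : ℕ → ℤ)
    (hmpos : ∀ i, 1 ≤ i → i ≤ n → 0 < m i)
    (hminc : ∀ i, 1 ≤ i → i < n → m i < m (i + 1))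
    (χ : Fin (n + 1) → ℝ)
    (hχ : χ = ∑ i ∈ Finset.Icc 1 n, (m i : ℝ) • sroot (n + 1) i)
    (hreg : ∀ i j : Fin (n + 1), i < j → χ j < χ i)
    (w : Equiv.Perm (Fin (n + 1))) :
    vle (n + 1) (permAct (n + 1) w χ) 0 ↔
      ∃ τ ∈ Subgroup.closure {g : Equiv.Perm (Fin (n + 1)) |
          ∃ i, 1 ≤ i ∧ i ≤ n - 1 ∧ g = sTrans (n + 1) i},
        w = ((List.range' 1 n).map (sTrans (n + 1))).prod * τ := by
  obtain ⟨n, rfl⟩ : ∃ k, n = k + 1 := ⟨n - 1, by omega⟩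
  have hR : (∃ τ ∈ Subgroup.closure {g : Equiv.Perm (Fin (n + 1 + 1)) |
          ∃ i, 1 ≤ i ∧ i ≤ n + 1 - 1 ∧ g = sTrans (n + 1 + 1) i},
        w = ((List.range' 1 (n + 1)).map (sTrans (n + 1 + 1))).prod * τ) ↔
        w (Fin.last (n + 1)) = 0 := by
    have hP : ((List.range' 1 (n + 1)).map (sTrans (n + 1 + 1))).prod (Fin.last (n + 1)) = 0 :=
      prod_last (n + 1) (n + 1) le_rfl
    constructor
    · rintro ⟨τ, hτ, rfl⟩
      rw [closure_fix] at hτ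
      rw [Equiv.Perm.mul_apply, hτ, hP]
    · intro h
      refine ⟨(((List.range' 1 (n + 1)).map (sTrans (n + 1 + 1))).prod)⁻¹ * w, ?_, by simp⟩
      rw [closure_fix, Equiv.Perm.mul_apply, h, Equiv.Perm.inv_eq_iff_eq, hP]
  rw [hR]
  -- coordinates of χ
  let m' : ℕ → ℝ := fun i => if 1 ≤ i ∧ i ≤ n + 1 then (m i : ℝ) else 0
  have hχ' : ∀ k : Fin (n + 1 + 1), χ k = m' (k.val + 1) - m' k.val := by
    intro k
    rw [← comb_apply (n + 1) m' (by simp [m']) (by simp [m']), hχ]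
    refine congrFun (Finset.sum_congr rfl ?_) k
    intro i hi
    rw [Finset.mem_Icc] at hi
    simp only [m', if_pos hi]
  have hpos : ∀ k : Fin (n + 1 + 1), k ≠ Fin.last (n + 1) → 0 < χ k := by
    intro k hk
    have hk2 := k.2
    have hk' : k.val ≠ n + 1 := by simpa [Fin.ext_iff] using hk
    rw [hχ']
    simp only [m']
    rw [if_pos ⟨by omega, by omega⟩]
    split_ifs with h
    · have := hminc k.val h.1 (by omega)
      rw [sub_pos]; exact_mod_cast this
    · have := hmpos (k.val + 1) (by omega) (by omega)
      rw [sub_zero]; exact_mod_cast this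
  have hsum : ∑ k, χ k = 0 := by
    simp only [hχ']
    rw [Fin.sum_univ_eq_sum_range (fun k => m' (k + 1) - m' k), Finset.sum_range_sub]
    simp [m']
  unfold vle IsNonnegComb permAct
  constructor
  · rintro ⟨c, hc, hv⟩
    by_contra hw
    let c' : ℕ → ℝ := fun i => if 1 ≤ i ∧ i ≤ n + 1 then c i else 0
    have h1 : (0 - χ ∘ w.symm) 0 = c' 1 - c' 0 := by
      have := comb_apply (n + 1) c' (by simp [c']) (by simp [c']) 0
      simp only [Fin.val_zero, zero_add] at this
      rw [← this, hv]
      refine congrFun (Finset.sum_congr rfl ?_) 0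
      intro i hi
      rw [Finset.mem_Icc] at hi
      simp only [c']
      rw [if_pos ⟨hi.1, by omega⟩]
    have h2 := hpos (w.symm 0) (by
      intro h; apply hw; rw [← h]; simp)
    have h3 := hc 1
    simp [c'] at h1
    linarith
  · intro hw
    let c : ℕ → ℝ := fun i => ∑ j : Fin (n + 1 + 1), if i ≤ j.val then χ (w.symm j) else 0
    have hc0 : c 0 = 0 := by
      simp only [c, Nat.zero_le, if_true]
      rw [Equiv.sum_comp w.symm χ, hsum]
    have hc1 : c (n + 1 + 1) = 0 := by
      apply Finset.sum_eq_zero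
      intro j _
      rw [if_neg (by have := j.2; omega)]
    refine ⟨c, ?_, ?_⟩
    · intro i
      rcases Nat.eq_zero_or_pos i with rfl | hi
      · exact hc0.ge
      · apply Finset.sum_nonneg
        intro j _
        split_ifs with h
        · apply le_of_lt
          apply hpos
          intro h'
          rw [Equiv.symm_apply_eq, hw] at h'
          rw [h'] at h
          simp at h
          omega
        · exact le_rfl
    · funext k
      rw [show n + 1 + 1 - 1 = n + 1 from rfl, comb_apply (n + 1) c hc0 hc1]
      simp only [c]
      rw [← Finset.sum_sub_distrib, Finset.sum_eq_single k]
      · simp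
      · intro j _ hj
        have : j.val ≠ k.val := fun h => hj (Fin.ext h)
        by_cases h : k.val + 1 ≤ j.val
        · rw [if_pos h, if_pos (by omega), sub_self]
        · rw [if_neg h, if_neg (by omega), sub_self]
      · simp

end SnPaper
end
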